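/- Uniform law of large numbers for Betti numbers: fix integers 0 ≤ q < d. Let P be a stationary and ergodic probability measure on Ω = [0,1]^{K^d} such that the marginal distribution function F^Q(t) = P(ω_Q ≤ t) is continuous in t ∈ [0,1] for every Q ∈ K^d, and let β̂_q(t) := limsup_{n→∞} |Λ_n|^{−1} E[β_q^n(t)]. Then sup_{t∈[0,1]} | |Λ_n|^{−1} β_q^n(t) − β̂_q(t) | → 0 as n → ∞, P-almost surely. -/

import Mathlib

open MeasureTheory Filter Topology

noncomputable section

/-- An elementary cube in `ℝ^d`: the `i`-th component is the elementary interval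
`[l, l+1]` if the Boolean is `true` (nondegenerate) and `[l, l]` if `false` (degenerate). -/
abbrev ElemCube (d : ℕ) := Fin d → ℤ × Bool

/-- The dimension of an elementary cube: the number of nondegenerate components. -/
def cubeDim {d : ℕ} (Q : ElemCube d) : ℕ :=
  (Finset.univ.filter fun i => (Q i).2 = true).card

/-- The geometric realization of an elementary cube as a subset of `ℝ^d`. -/
def cubeSet {d : ℕ} (Q : ElemCube d) : Set (Fin d → ℝ) :=
  {x | ∀ i, x i ∈ Set.Icc ((Q i).1 : ℝ) ((Q i).1 + (if (Q i).2 then 1 else 0))}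

/-- A cubical set is a union of elementary cubes. -/
def IsCubical {d : ℕ} (X : Set (Fin d → ℝ)) : Prop :=
  ∃ S : Set (ElemCube d), X = ⋃ Q ∈ S, cubeSet Q

/-- The free `ℤ`-module generated by all elementary cubes of `ℝ^d` (all dimensions mixed). -/
abbrev CubChain (d : ℕ) := ElemCube d →₀ ℤ

/-- The cubical boundary of a single elementary cube, defined by induction on the ambient
dimension, following the inductive definition: in `ℝ¹`, `∂ [l,l+1]^ = [l+1]^ - [l]^` and
`∂ Q̂ = 0` for degenerate `Q`; and for `Q = I × P`,
`∂ Q̂ = (∂ Î) ⋄ P̂ + (-1)^(dim I) Î ⋄ (∂ P̂)`, where `⋄` is the cubical product. -/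
def boundaryCube : (d : ℕ) → ElemCube d → CubChain d
  | 0, _ => 0
  | d + 1, Q =>
      (if (Q 0).2 then
          Finsupp.single (Fin.cons ((Q 0).1 + 1, false) (fun i => Q i.succ)) (1 : ℤ)
            - Finsupp.single (Fin.cons ((Q 0).1, false) (fun i => Q i.succ)) (1 : ℤ)
        else 0)
      + (if (Q 0).2 then (-1 : ℤ) else 1) •
          (boundaryCube d (fun i => Q i.succ)).sum
            (fun R n => Finsupp.single (Fin.cons (Q 0) R) n)

/-- The cubical boundary operator, the `ℤ`-linear extension of `boundaryCube`. -/
def boundaryHom (d : ℕ) : CubChain d →ₗ[ℤ] CubChain d :=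
  Finsupp.lsum ℤ fun Q => LinearMap.toSpanSingleton ℤ (CubChain d) (boundaryCube d Q)

/-- `C_k^d(X)`: the submodule of chains supported on the `k`-dimensional elementary cubes
contained in `X`. -/
def chainsOn (d k : ℕ) (X : Set (Fin d → ℝ)) : Submodule ℤ (CubChain d) :=
  Finsupp.supported ℤ ℤ {Q : ElemCube d | cubeDim Q = k ∧ cubeSet Q ⊆ X}

/-- `Z_q(X) = ker ∂_q^X`, the cycles of the cubical set `X` in degree `q`. -/
def cycleMod (d q : ℕ) (X : Set (Fin d → ℝ)) : Submodule ℤ (CubChain d) :=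
  chainsOn d q X ⊓ LinearMap.ker (boundaryHom d)

/-- `B_q(X) = im ∂_{q+1}^X`, the boundaries of the cubical set `X` in degree `q`. -/
def boundaryMod (d q : ℕ) (X : Set (Fin d → ℝ)) : Submodule ℤ (CubChain d) :=
  Submodule.map (boundaryHom d) (chainsOn d (q + 1) X)

/-- The `q`-th Betti number of a cubical set: the rank of the free part of the `q`-th
cubical homology `H_q(X) = Z_q(X) / B_q(X)`. -/
def betti (d q : ℕ) (X : Set (Fin d → ℝ)) : ℕ :=
  Module.finrank ℤ
    (↥(cycleMod d q X) ⧸ (boundaryMod d q X).comap (cycleMod d q X).subtype)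

/-- `Λ_n = [-n, n]^d ⊆ ℝ^d`. -/
def lambda (d n : ℕ) : Set (Fin d → ℝ) := {x | ∀ i, x i ∈ Set.Icc (-(n : ℝ)) n}

/-- The configuration space `Ω = [0,1]^{K^d}` with the product σ-field. -/
abbrev Config (d : ℕ) := ElemCube d → unitInterval

/-- Translation of an elementary cube by `x ∈ ℤ^d`. -/
def translateCube {d : ℕ} (x : Fin d → ℤ) (Q : ElemCube d) : ElemCube d :=
  fun i => ((Q i).1 + x i, (Q i).2)

/-- The translation action `τ_x` on configurations: `(τ_x ω)_Q = ω_{-x+Q}`. -/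
def configShift {d : ℕ} (x : Fin d → ℤ) (ω : Config d) : Config d :=
  fun Q => ω (translateCube (-x) Q)

/-- Stationarity of a measure on configuration space: `P(τ_x⁻¹ A) = P(A)`. -/
def Stationary {d : ℕ} (P : Measure (Config d)) : Prop :=
  ∀ (x : Fin d → ℤ) (A : Set (Config d)), MeasurableSet A → P (configShift x ⁻¹' A) = P A

/-- Ergodicity of a measure on configuration space under translations. -/
def ErgodicConfig {d : ℕ} (P : Measure (Config d)) : Prop :=
  ∀ A : Set (Config d), MeasurableSet A →
    (∀ x : Fin d → ℤ, configShift x ⁻¹' A = A) → P A = 0 ∨ P A = 1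

/-- The random cubical set `X(t) = ⋃ {Q ∈ K^d : ω_Q ≤ t}`. -/
def cubSet {d : ℕ} (ω : Config d) (t : ℝ) : Set (Fin d → ℝ) :=
  ⋃ Q ∈ {Q : ElemCube d | (ω Q : ℝ) ≤ t}, cubeSet Q

/-- `β_q^n(t)(ω) = β_q(X(t) ∩ Λ_n)`. -/
def bettiN (d q n : ℕ) (t : ℝ) (ω : Config d) : ℕ :=
  betti d q (cubSet ω t ∩ lambda d n)

/-- `β̂_q(t) := limsup_{n → ∞} |Λ_n|⁻¹ E[β_q^n(t)]`, where `|Λ_n| = (2n)^d`. -/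
def betaHat (d q : ℕ) (P : Measure (Config d)) (t : ℝ) : ℝ :=
  limsup (fun n : ℕ => ((2 * (n : ℝ)) ^ d)⁻¹ * ∫ ω, (bettiN d q n t ω : ℝ) ∂P) atTop

/-!
The Betti number `β_q` of a finite cubical complex is the number of its `q`-cubes minus the ranks
of `∂_q` and `∂_{q+1}`. The rank of a boundary operator is the number of cubes whose boundary does
not depend rationally on the boundaries of the cubes preceding it in a fixed linear order. For the
lexicographic order, which is invariant under translations, this number in `Λ_n` lies between two
counts of stationary observables: the cubes whose boundary is independent of all earlier cubes of
`X(t)`, and, up to `o(n^d)` cubes near the boundary of `Λ_n`, those whose boundary is independent of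
the earlier cubes at distance at most `m`. The pointwise ergodic theorem for `ℤ^d`, obtained from
Birkhoff's theorem one coordinate at a time, evaluates both counts, and their densities agree in
the limit `m → ∞` because a linear dependency involves finitely many cubes.

Uniformity in `t` follows as in the theorems of Pólya and Glivenko–Cantelli: the increments of
`β_q^n` are bounded by those of the number of `q`- and `(q+1)`-cubes, which is monotone in `t` and
has a continuous limiting density.
-/

/-! ### The pointwise ergodic theorem for a single transformation -/

section LimsupBounded

variable {u v : ℕ → ℝ} {C : ℝ}

lemma isBoundedUnder_le_of_abs_le (hu : ∀ n, |u n| ≤ C) : IsBoundedUnder (· ≤ ·) atTop u :=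
  isBoundedUnder_of ⟨C, fun n => (abs_le.1 (hu n)).2⟩

lemma isBoundedUnder_ge_of_abs_le (hu : ∀ n, |u n| ≤ C) : IsBoundedUnder (· ≥ ·) atTop u :=
  isBoundedUnder_of ⟨-C, fun n => (abs_le.1 (hu n)).1⟩

lemma abs_limsup_le (hu : ∀ n, |u n| ≤ C) : |limsup u atTop| ≤ C :=
  abs_le.2
    ⟨le_limsup_of_frequently_le (Frequently.of_forall fun n => (abs_le.1 (hu n)).1)
      (isBoundedUnder_le_of_abs_le hu),
    limsup_le_of_le (isBoundedUnder_ge_of_abs_le hu).isCoboundedUnder_flip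
      (.of_forall fun n => (abs_le.1 (hu n)).2)⟩

lemma limsup_le_limsup_of_sub_tendsto_zero (hv : ∀ n, |v n| ≤ C)
    (huv : Tendsto (fun n => u n - v n) atTop (𝓝 0)) : limsup u atTop ≤ limsup v atTop := by
  have hle := limsup_add_le huv.isBoundedUnder_ge huv.isBoundedUnder_le
    (isBoundedUnder_ge_of_abs_le hv).isCoboundedUnder_flip (isBoundedUnder_le_of_abs_le hv)
  rw [huv.limsup_eq, zero_add] at hle
  refine le_of_eq_of_le (congrArg (limsup · atTop) (funext fun n => ?_)) hle
  exact (sub_add_cancel _ _).symm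

lemma limsup_eq_limsup_of_sub_tendsto_zero (hu : ∀ n, |u n| ≤ C) (hv : ∀ n, |v n| ≤ C)
    (huv : Tendsto (fun n => u n - v n) atTop (𝓝 0)) : limsup u atTop = limsup v atTop :=
  (limsup_le_limsup_of_sub_tendsto_zero hv huv).antisymm
    (limsup_le_limsup_of_sub_tendsto_zero hu (by simpa using huv.neg))

lemma limsup_neg_eq_neg_liminf (hu : ∀ n, |u n| ≤ C) : limsup (-u) atTop = -liminf u atTop :=
  (Antitone.map_liminf_of_continuousAt (fun _ _ => neg_le_neg) u continuous_neg.continuousAt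
    (isBoundedUnder_le_of_abs_le hu).isCoboundedUnder_flip
    (isBoundedUnder_ge_of_abs_le hu)).symm

end LimsupBounded

section Birkhoff

variable {Ω : Type*} {T : Ω → Ω} {f : Ω → ℝ} {C : ℝ}

/-- Garsia's maximal function `max_{k ≤ N} S_k f` of the Birkhoff sums `S_k f`, with `S_0 f = 0`
included, in the recursive form on which the maximal ergodic inequality rests. -/
def garsiaMax (T : Ω → Ω) (f : Ω → ℝ) : ℕ → Ω → ℝ
  | 0, _ => 0
  | N + 1, ω => max 0 (f ω + garsiaMax T f N (T ω))

lemma garsiaMax_nonneg (N : ℕ) (ω : Ω) : 0 ≤ garsiaMax T f N ω := by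
  cases N with
  | zero => exact le_rfl
  | succ N => exact le_max_left _ _

lemma monotone_garsiaMax (ω : Ω) : Monotone fun N => garsiaMax T f N ω := by
  refine monotone_nat_of_le_succ fun N => ?_
  induction N generalizing ω with
  | zero => exact garsiaMax_nonneg _ _
  | succ N ih => exact max_le_max le_rfl (add_le_add le_rfl (ih (T ω)))

lemma birkhoffSum_le_garsiaMax (N : ℕ) (ω : Ω) : birkhoffSum T f N ω ≤ garsiaMax T f N ω := by
  induction N generalizing ω with
  | zero => exact le_rfl
  | succ N ih =>
    rw [birkhoffSum_succ']
    exact le_max_of_le_right (add_le_add le_rfl (ih (T ω)))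

lemma garsiaMax_succ_sub_le_indicator (N : ℕ) (ω : Ω) :
    garsiaMax T f (N + 1) ω - garsiaMax T f N (T ω) ≤
      {ω | 0 < garsiaMax T f (N + 1) ω}.indicator f ω := by
  by_cases hpos : 0 < garsiaMax T f (N + 1) ω
  · have heq : garsiaMax T f (N + 1) ω = f ω + garsiaMax T f N (T ω) :=
      max_eq_right ((lt_max_iff.1 hpos).resolve_left (lt_irrefl _)).le
    rw [Set.indicator_of_mem (by exact hpos), heq, add_sub_cancel_right]
  · rw [Set.indicator_of_notMem (by exact hpos)]
    linarith [garsiaMax_nonneg (T := T) (f := f) N (T ω)]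

lemma abs_birkhoffAverage_le (hC : ∀ ω, |f ω| ≤ C) (n : ℕ) (ω : Ω) :
    |birkhoffAverage ℝ T f n ω| ≤ C := by
  rcases n.eq_zero_or_pos with rfl | hn
  · simpa using (abs_nonneg _).trans (hC ω)
  rw [birkhoffAverage, smul_eq_mul, abs_mul, abs_inv, Nat.abs_cast,
    inv_mul_le_iff₀ (by exact_mod_cast hn), ← nsmul_eq_mul]
  calc |birkhoffSum T f n ω| ≤ ∑ k ∈ Finset.range n, |f (T^[k] ω)| :=
        Finset.abs_sum_le_sum_abs _ _
    _ ≤ n • C := by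
        simpa using Finset.sum_le_card_nsmul (Finset.range n) _ C fun k _ => hC (T^[k] ω)

/-- The upper limit of the Birkhoff averages of `f`. -/
def birkhoffLimsup (T : Ω → Ω) (f : Ω → ℝ) (ω : Ω) : ℝ :=
  limsup (fun n => birkhoffAverage ℝ T f n ω) atTop

lemma abs_birkhoffLimsup_le (hC : ∀ ω, |f ω| ≤ C) (ω : Ω) : |birkhoffLimsup T f ω| ≤ C :=
  abs_limsup_le fun n => abs_birkhoffAverage_le hC n ω

lemma birkhoffLimsup_comp (hC : ∀ ω, |f ω| ≤ C) : birkhoffLimsup T f ∘ T = birkhoffLimsup T f :=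
  funext fun ω => limsup_eq_limsup_of_sub_tendsto_zero (abs_birkhoffAverage_le hC · _)
    (abs_birkhoffAverage_le hC · _) <|
    tendsto_birkhoffAverage_apply_sub_birkhoffAverage' ℝ
      (isBounded_iff_forall_norm_le.2 ⟨C, Set.forall_mem_range.2 hC⟩) T ω

lemma birkhoffLimsup_neg (hC : ∀ ω, |f ω| ≤ C) (ω : Ω) :
    birkhoffLimsup T (-f) ω = -liminf (fun n => birkhoffAverage ℝ T f n ω) atTop := by
  rw [← limsup_neg_eq_neg_liminf fun n => abs_birkhoffAverage_le hC n ω]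
  refine congrArg (limsup · atTop) (funext fun n => ?_)
  exact congrFun (congrFun birkhoffAverage_neg n) ω

lemma exists_birkhoffSum_sub_birkhoffLimsup_pos (hC : ∀ ω, |f ω| ≤ C) {ε : ℝ} (hε : 0 < ε)
    (ω : Ω) : ∃ n, 0 < birkhoffSum T (fun ω => f ω - (birkhoffLimsup T f ω - ε)) n ω := by
  have hfreq : ∃ᶠ n in atTop, birkhoffLimsup T f ω - ε < birkhoffAverage ℝ T f n ω :=
    frequently_lt_of_lt_limsup (isBoundedUnder_ge_of_abs_le
      (abs_birkhoffAverage_le hC · ω)).isCoboundedUnder_flip (sub_lt_self _ hε)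
  obtain ⟨n, hn, hn0⟩ := (hfreq.and_eventually (eventually_gt_atTop 0)).exists
  have hinv : (fun ω => birkhoffLimsup T f ω - ε) ∘ T = fun ω => birkhoffLimsup T f ω - ε := by
    ext ω
    exact congrArg (· - ε) (congrFun (birkhoffLimsup_comp hC) ω)
  refine ⟨n, ?_⟩
  rw [birkhoffAverage, smul_eq_mul, lt_inv_mul_iff₀ (by exact_mod_cast hn0)] at hn
  have hsub := birkhoffSum_sub T f (fun ω => birkhoffLimsup T f ω - ε) n ω
  rw [birkhoffSum_of_comp_eq hinv] at hsub
  refine lt_of_lt_of_eq (sub_pos.2 hn) (Eq.trans ?_ hsub.symm)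
  simp

variable [MeasurableSpace Ω] {μ : Measure Ω}

lemma integral_comp_of_measurePreserving (hT : MeasurePreserving T μ μ)
    (hf : AEStronglyMeasurable f μ) : ∫ ω, f (T ω) ∂μ = ∫ ω, f ω ∂μ := by
  rw [← integral_map hT.aemeasurable (by rwa [hT.map_eq]), hT.map_eq]

lemma measurable_garsiaMax (hT : Measurable T) (hf : Measurable f) (N : ℕ) :
    Measurable (garsiaMax T f N) := by
  induction N with
  | zero => exact measurable_const
  | succ N ih => exact measurable_const.max (hf.add (ih.comp hT))

lemma integrable_garsiaMax (hT : MeasurePreserving T μ μ) (hf : Integrable f μ) (N : ℕ) :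
    Integrable (garsiaMax T f N) μ := by
  induction N with
  | zero => exact integrable_zero _ _ _
  | succ N ih => exact (integrable_zero _ _ _).sup (hf.add (hT.integrable_comp_of_integrable ih))

lemma integral_indicator_garsiaMax_pos_nonneg (hT : MeasurePreserving T μ μ) (hf : Measurable f)
    (hfi : Integrable f μ) (N : ℕ) :
    0 ≤ ∫ ω, {ω | 0 < garsiaMax T f (N + 1) ω}.indicator f ω ∂μ := by
  have hint := integrable_garsiaMax hT hfi
  have hpos : MeasurableSet {ω | 0 < garsiaMax T f (N + 1) ω} :=
    measurableSet_lt measurable_const (measurable_garsiaMax hT.measurable hf _)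
  have hint' : Integrable (fun ω => garsiaMax T f N (T ω)) μ :=
    hT.integrable_comp_of_integrable (hint N)
  have hcomp : ∫ ω, garsiaMax T f N (T ω) ∂μ = ∫ ω, garsiaMax T f N ω ∂μ :=
    integral_comp_of_measurePreserving hT (hint N).1
  calc 0 ≤ ∫ ω, garsiaMax T f (N + 1) ω ∂μ - ∫ ω, garsiaMax T f N ω ∂μ :=
        sub_nonneg.2 <| integral_mono (hint N) (hint (N + 1))
          fun ω => monotone_garsiaMax ω N.le_succ
    _ = ∫ ω, (garsiaMax T f (N + 1) ω - garsiaMax T f N (T ω)) ∂μ := by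
        rw [integral_sub (hint _) hint', hcomp]
    _ ≤ ∫ ω, {ω | 0 < garsiaMax T f (N + 1) ω}.indicator f ω ∂μ :=
        integral_mono ((hint _).sub hint') (hfi.indicator hpos)
          (garsiaMax_succ_sub_le_indicator N)

theorem integral_nonneg_of_exists_birkhoffSum_pos (hT : MeasurePreserving T μ μ)
    (hf : Measurable f) (hfi : Integrable f μ) (hpos : ∀ ω, ∃ k, 0 < birkhoffSum T f k ω) :
    0 ≤ ∫ ω, f ω ∂μ := by
  refine ge_of_tendsto' (tendsto_integral_of_dominated_convergence (fun ω => ‖f ω‖) (fun N => ?_)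
    hfi.norm (fun N => ae_of_all _ fun ω => norm_indicator_le_norm_self _ _)
    (ae_of_all _ fun ω => ?_)) (integral_indicator_garsiaMax_pos_nonneg hT hf hfi)
  · exact (hf.indicator (measurableSet_lt measurable_const
      (measurable_garsiaMax hT.measurable hf _))).aestronglyMeasurable
  · obtain ⟨k, hk⟩ := hpos ω
    refine tendsto_const_nhds.congr' ?_
    filter_upwards [eventually_ge_atTop k] with N hkN
    refine (Set.indicator_of_mem (a := ω) ?_ f).symm
    exact (hk.trans_le (birkhoffSum_le_garsiaMax k ω)).trans_le
      (monotone_garsiaMax ω (hkN.trans N.le_succ))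

lemma measurable_birkhoffLimsup (hT : Measurable T) (hf : Measurable f) :
    Measurable (birkhoffLimsup T f) :=
  Measurable.limsup fun n =>
    (Finset.measurable_fun_sum _ fun k _ => hf.comp (hT.iterate k)).const_mul ((n : ℝ)⁻¹)

variable [IsFiniteMeasure μ]

lemma integrable_of_abs_le (hf : Measurable f) (hC : ∀ ω, |f ω| ≤ C) : Integrable f μ :=
  Integrable.of_bound hf.aestronglyMeasurable C (ae_of_all _ hC)

lemma integrable_birkhoffLimsup (hT : Measurable T) (hf : Measurable f) (hC : ∀ ω, |f ω| ≤ C) :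
    Integrable (birkhoffLimsup T f) μ :=
  integrable_of_abs_le (measurable_birkhoffLimsup hT hf) (abs_birkhoffLimsup_le hC)

lemma integral_birkhoffLimsup_le (hT : MeasurePreserving T μ μ) (hf : Measurable f)
    (hC : ∀ ω, |f ω| ≤ C) : ∫ ω, birkhoffLimsup T f ω ∂μ ≤ ∫ ω, f ω ∂μ := by
  have hL := integrable_birkhoffLimsup (μ := μ) hT.measurable hf hC
  have hfi := integrable_of_abs_le (μ := μ) hf hC
  have hshift (ε : ℝ) (hε : 0 < ε) :
      ∫ ω, birkhoffLimsup T f ω ∂μ ≤ ∫ ω, f ω ∂μ + μ.real Set.univ * ε := by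
    have hLε : Integrable (fun ω => birkhoffLimsup T f ω - ε) μ := hL.sub (integrable_const ε)
    have hnonneg := integral_nonneg_of_exists_birkhoffSum_pos hT
      (hf.sub ((measurable_birkhoffLimsup hT.measurable hf).sub_const ε))
      (hfi.sub hLε)
      (exists_birkhoffSum_sub_birkhoffLimsup_pos hC hε)
    rw [integral_sub' hfi hLε, integral_sub hL (integrable_const ε),
      integral_const, smul_eq_mul] at hnonneg
    linarith
  have hlim : Tendsto (fun ε : ℝ => ∫ ω, f ω ∂μ + μ.real Set.univ * ε) (𝓝[>] 0)
      (𝓝 (∫ ω, f ω ∂μ)) := by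
    refine Tendsto.mono_left ?_ nhdsWithin_le_nhds
    exact Continuous.tendsto' (by fun_prop) 0 _ (by simp)
  exact ge_of_tendsto hlim (eventually_nhdsWithin_of_forall hshift)

theorem ae_exists_tendsto_birkhoffAverage (hT : MeasurePreserving T μ μ) (hf : Measurable f)
    (hC : ∀ ω, |f ω| ≤ C) :
    ∀ᵐ ω ∂μ, ∃ c, Tendsto (fun n => birkhoffAverage ℝ T f n ω) atTop (𝓝 c) := by
  have hC' (ω : Ω) : |(-f) ω| ≤ C := by simpa using hC ω
  have hL := integrable_birkhoffLimsup (μ := μ) hT.measurable hf hC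
  have hL' := integrable_birkhoffLimsup (μ := μ) hT.measurable hf.neg hC'
  have hbounds (ω : Ω) (n : ℕ) := abs_birkhoffAverage_le (T := T) hC n ω
  have hgap_nonneg : 0 ≤ᵐ[μ] birkhoffLimsup T f + birkhoffLimsup T (-f) := by
    refine ae_of_all _ fun ω => ?_
    rw [Pi.add_apply, birkhoffLimsup_neg hC, ← sub_eq_add_neg]
    exact sub_nonneg.2 (liminf_le_limsup (isBoundedUnder_le_of_abs_le (hbounds ω))
      (isBoundedUnder_ge_of_abs_le (hbounds ω)))
  have hgap_integral : ∫ ω, (birkhoffLimsup T f + birkhoffLimsup T (-f)) ω ∂μ = 0 := by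
    refine le_antisymm ?_ (integral_nonneg_of_ae hgap_nonneg)
    have hle := integral_birkhoffLimsup_le hT hf hC
    have hle' := integral_birkhoffLimsup_le hT hf.neg hC'
    simp only [Pi.neg_apply, integral_neg] at hle'
    simp only [Pi.add_apply]
    rw [integral_add hL hL']
    linarith
  filter_upwards [(integral_eq_zero_iff_of_nonneg_ae hgap_nonneg (hL.add hL')).1 hgap_integral]
    with ω hω
  rw [Pi.add_apply, birkhoffLimsup_neg hC, Pi.zero_apply, ← sub_eq_add_neg, sub_eq_zero] at hω
  exact ⟨_, tendsto_of_liminf_eq_limsup hω.symm rfl (isBoundedUnder_le_of_abs_le (hbounds ω))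
    (isBoundedUnder_ge_of_abs_le (hbounds ω))⟩

end Birkhoff

/-! ### The pointwise ergodic theorem for actions of `ℤ^ι` -/

section TailSup

/-- The supremum `sup_{m ≥ N} u_m` of a tail of the sequence `u`. -/
def tailSup (u : ℕ → ℝ) (N : ℕ) : ℝ := ⨆ m, u (N + m)

variable {u : ℕ → ℝ} {C : ℝ}

lemma le_tailSup (hC : ∀ n, u n ≤ C) {N n : ℕ} (hNn : N ≤ n) : u n ≤ tailSup u N := by
  obtain ⟨m, rfl⟩ := Nat.exists_eq_add_of_le hNn
  exact le_ciSup (f := fun m => u (N + m)) ⟨C, Set.forall_mem_range.2 fun m => hC _⟩ m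

lemma abs_tailSup_le (h0 : ∀ n, 0 ≤ u n) (hC : ∀ n, u n ≤ C) (N : ℕ) : |tailSup u N| ≤ C := by
  rw [abs_of_nonneg ((h0 N).trans (le_tailSup hC le_rfl))]
  exact ciSup_le fun m => hC _

lemma tendsto_tailSup_zero (h0 : ∀ n, 0 ≤ u n) (hC : ∀ n, u n ≤ C)
    (hu : Tendsto u atTop (𝓝 0)) : Tendsto (tailSup u) atTop (𝓝 0) := by
  refine tendsto_order.2 ⟨fun a ha => .of_forall fun N =>
    ha.trans_le ((h0 N).trans (le_tailSup hC le_rfl)), fun ε hε => ?_⟩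
  obtain ⟨N₀, hN₀⟩ := eventually_atTop.1 (hu.eventually_lt_const (half_pos hε))
  filter_upwards [eventually_ge_atTop N₀] with N hN
  exact (ciSup_le fun m => (hN₀ _ (by omega)).le).trans_lt (half_lt_self hε)

end TailSup

section Box

variable {ι : Type*} [DecidableEq ι]

/-- The segment `[-n, n)` on the `i`-th coordinate axis of `ℤ^ι`. -/
def axisSegment (i : ι) (n : ℕ) : Finset (ι → ℤ) :=
  (Finset.Ico (-(n : ℤ)) n).map
    ⟨AddMonoidHom.single (fun _ : ι => ℤ) i, Pi.single_injective (M := fun _ : ι => ℤ) i⟩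

lemma mem_axisSegment {i : ι} {n : ℕ} {x : ι → ℤ} :
    x ∈ axisSegment i n ↔ ∃ a ∈ Finset.Ico (-(n : ℤ)) n, Pi.single i a = x :=
  Finset.mem_map

variable [Fintype ι]

/-- The lattice points of the half-open cube `[-n, n)^ι`. -/
def latticeBox (ι : Type*) [Fintype ι] [DecidableEq ι] (n : ℕ) : Finset (ι → ℤ) :=
  Fintype.piFinset fun _ => Finset.Ico (-(n : ℤ)) n

/-- The lattice points of the half-open cube `[-n, n)^s`, embedded into `ℤ^ι` with vanishing
coordinates outside `s`; it interpolates between `{0}` and `latticeBox ι n`. -/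
def partialBox (s : Finset ι) (n : ℕ) : Finset (ι → ℤ) :=
  Fintype.piFinset fun i => if i ∈ s then Finset.Ico (-(n : ℤ)) n else {0}

lemma mem_latticeBox {n : ℕ} {x : ι → ℤ} : x ∈ latticeBox ι n ↔ ∀ i, -(n : ℤ) ≤ x i ∧ x i < n := by
  simp only [latticeBox, Fintype.mem_piFinset, Finset.mem_Ico]

lemma card_latticeBox (n : ℕ) : (latticeBox ι n).card = (2 * n) ^ Fintype.card ι := by
  rw [latticeBox, Fintype.card_piFinset, Finset.prod_const, Finset.card_univ, Int.card_Ico]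
  congr 1
  omega

lemma latticeBox_mono : Monotone (latticeBox ι) := fun m n hmn x hx => by
  rw [mem_latticeBox] at hx ⊢
  exact fun i => by have := hx i; omega

lemma exists_map_addRight_latticeBox_subset (y : ι → ℤ) :
    ∃ m, ∀ n, (latticeBox ι n).map (addRightEmbedding y) ⊆ latticeBox ι (n + m) := by
  refine ⟨∑ i, (y i).natAbs, fun n x hx => ?_⟩
  obtain ⟨z, hz, rfl⟩ := Finset.mem_map.1 hx
  refine mem_latticeBox.2 fun i => ?_
  have hzi := mem_latticeBox.1 hz i
  have hyi : (y i).natAbs ≤ ∑ i, (y i).natAbs :=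
    Finset.single_le_sum (f := fun i => (y i).natAbs) (fun _ _ => Nat.zero_le _)
      (Finset.mem_univ i)
  simp only [addRightEmbedding_apply, Pi.add_apply]
  omega

lemma tendsto_card_latticeBox_add_div (m : ℕ) :
    Tendsto (fun n => ((latticeBox ι (n + m)).card : ℝ) / (latticeBox ι n).card) atTop (𝓝 1) := by
  have hratio : Tendsto (fun n : ℕ => (1 + (m : ℝ) / n) ^ Fintype.card ι) atTop (𝓝 1) := by
    simpa using ((tendsto_const_div_atTop_nhds_zero_nat (m : ℝ)).const_add 1).pow (Fintype.card ι)
  refine hratio.congr' ?_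
  filter_upwards [eventually_gt_atTop 0] with n hn
  rw [card_latticeBox, card_latticeBox]
  push_cast
  rw [← div_pow]
  congr 1
  field_simp

lemma mem_partialBox {s : Finset ι} {n : ℕ} {x : ι → ℤ} :
    x ∈ partialBox s n ↔ ∀ i, if i ∈ s then x i ∈ Finset.Ico (-(n : ℤ)) n else x i = 0 := by
  rw [partialBox, Fintype.mem_piFinset]
  refine forall_congr' fun i => ?_
  split_ifs
  exacts [Iff.rfl, Finset.mem_singleton]

lemma apply_eq_zero_of_mem_partialBox {s : Finset ι} {n : ℕ} {x : ι → ℤ}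
    (hx : x ∈ partialBox s n) {i : ι} (hi : i ∉ s) : x i = 0 := by
  simpa only [if_neg hi] using mem_partialBox.1 hx i

lemma partialBox_univ (n : ℕ) : partialBox Finset.univ n = latticeBox ι n := by
  simp only [partialBox, latticeBox, Finset.mem_univ, if_true]

lemma partialBox_empty (n : ℕ) : partialBox (∅ : Finset ι) n = {0} := by
  ext x
  simp [mem_partialBox, funext_iff]

lemma injOn_add_axisSegment_partialBox {i : ι} {s : Finset ι} (hi : i ∉ s) (n : ℕ) :
    Set.InjOn (fun p : (ι → ℤ) × (ι → ℤ) => p.1 + p.2)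
      (axisSegment i n ×ˢ partialBox s n : Finset ((ι → ℤ) × (ι → ℤ))) := by
  rintro ⟨x, y⟩ hxy ⟨x', y'⟩ hxy' (heq : x + y = x' + y')
  obtain ⟨hx, hy⟩ := Finset.mem_product.1 hxy
  obtain ⟨hx', hy'⟩ := Finset.mem_product.1 hxy'
  obtain ⟨a, -, rfl⟩ := mem_axisSegment.1 hx
  obtain ⟨a', -, rfl⟩ := mem_axisSegment.1 hx'
  have hyi : y i = 0 := apply_eq_zero_of_mem_partialBox hy hi
  have hyi' : y' i = 0 := apply_eq_zero_of_mem_partialBox hy' hi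
  obtain rfl : a = a' := by simpa [hyi, hyi'] using congrFun heq i
  rw [add_left_cancel heq]

open scoped Pointwise in
lemma partialBox_insert {i : ι} {s : Finset ι} (hi : i ∉ s) (n : ℕ) :
    partialBox (insert i s) n = axisSegment i n + partialBox s n := by
  ext x
  rw [Finset.mem_add]
  constructor
  · intro hx
    rw [mem_partialBox] at hx
    refine ⟨Pi.single i (x i), mem_axisSegment.2 ⟨x i, by simpa using hx i, rfl⟩,
      Function.update x i 0, mem_partialBox.2 fun j => ?_, ?_⟩
    · rcases eq_or_ne j i with rfl | hj
      · simp [hi]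
      · simpa [hj] using hx j
    · ext j
      rcases eq_or_ne j i with rfl | hj <;> simp [*]
  · rintro ⟨x, hx, y, hy, rfl⟩
    obtain ⟨a, ha, rfl⟩ := mem_axisSegment.1 hx
    have hyi : y i = 0 := apply_eq_zero_of_mem_partialBox hy hi
    refine mem_partialBox.2 fun j => ?_
    rcases eq_or_ne j i with rfl | hj
    · simpa [hyi] using ha
    · simpa [hj] using mem_partialBox.1 hy j

end Box

lemma abs_sum_sub_sum_le {α : Type*} {s t : Finset α} (hst : s ⊆ t) {g : α → ℝ} {C : ℝ}
    (hC : ∀ x, |g x| ≤ C) : |∑ x ∈ t, g x - ∑ x ∈ s, g x| ≤ C * (t.card - s.card) := by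
  classical
  rw [← Finset.sum_sdiff_eq_sub hst, mul_comm, ← Nat.cast_sub (Finset.card_le_card hst),
    ← Finset.card_sdiff_of_subset hst, ← nsmul_eq_mul]
  exact (Finset.abs_sum_le_sum_abs _ _).trans (Finset.sum_le_card_nsmul _ _ _ fun x _ => hC x)

section OrbitAverage

open scoped BigOperators Pointwise

variable {G Ω : Type*}

/-- The average of the observable `f` over the part of the orbit of `ω` indexed by `s`. -/
def orbitAverage [VAdd G Ω] (s : Finset G) (f : Ω → ℝ) (ω : Ω) : ℝ := 𝔼 x ∈ s, f (x +ᵥ ω)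

section Pointwise

variable [VAdd G Ω] {f g : Ω → ℝ} {C : ℝ}

lemma orbitAverage_mono (hfg : f ≤ g) (s : Finset G) : orbitAverage s f ≤ orbitAverage s g :=
  fun ω => Finset.expect_le_expect fun x _ => hfg (x +ᵥ ω)

lemma orbitAverage_sub (s : Finset G) (f g : Ω → ℝ) :
    orbitAverage s (f - g) = orbitAverage s f - orbitAverage s g :=
  funext fun _ => Finset.expect_sub_distrib _ _ _

lemma abs_orbitAverage_le_orbitAverage_abs (s : Finset G) (f : Ω → ℝ) (ω : Ω) :
    |orbitAverage s f ω| ≤ orbitAverage s (fun ω => |f ω|) ω :=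
  Finset.abs_expect_le s fun x => f (x +ᵥ ω)

lemma orbitAverage_nonneg (hf : 0 ≤ f) (s : Finset G) : 0 ≤ orbitAverage s f :=
  fun ω => Finset.expect_nonneg fun x _ => hf (x +ᵥ ω)

lemma abs_orbitAverage_le (hC : ∀ ω, |f ω| ≤ C) (s : Finset G) (ω : Ω) :
    |orbitAverage s f ω| ≤ C := by
  rcases s.eq_empty_or_nonempty with rfl | hs
  · simpa [orbitAverage] using (abs_nonneg _).trans (hC ω)
  · exact (abs_orbitAverage_le_orbitAverage_abs s f ω).trans
      (Finset.expect_le hs fun x _ => hC (x +ᵥ ω))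

lemma orbitAverage_eq_inv_card_mul (s : Finset G) (f : Ω → ℝ) (ω : Ω) :
    orbitAverage s f ω = (s.card : ℝ)⁻¹ * ∑ x ∈ s, f (x +ᵥ ω) := by
  rw [orbitAverage, Finset.expect_eq_sum_div_card, div_eq_inv_mul]

/-- The upper limit of the averages of `f` along the windows `F n`. -/
def orbitLimsup (F : ℕ → Finset G) (f : Ω → ℝ) (ω : Ω) : ℝ :=
  limsup (fun n => orbitAverage (F n) f ω) atTop

lemma abs_orbitLimsup_le {F : ℕ → Finset G} (hC : ∀ ω, |f ω| ≤ C) (ω : Ω) :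
    |orbitLimsup F f ω| ≤ C :=
  abs_limsup_le fun n => abs_orbitAverage_le hC (F n) ω

lemma limsup_orbitAverage_le_orbitLimsup_tailSup {F : ℕ → Finset G} {u : ℕ → Ω → ℝ}
    (h0 : ∀ n, 0 ≤ u n) (hC : ∀ n ω, u n ω ≤ C) (N : ℕ) (ω : Ω) :
    limsup (fun n => orbitAverage (F n) (u n) ω) atTop ≤
      orbitLimsup F (fun ω => tailSup (u · ω) N) ω := by
  refine limsup_le_limsup ?_ (isBoundedUnder_of (r := (· ≥ ·))
      ⟨0, fun n => orbitAverage_nonneg (h0 n) (F n) ω⟩).isCoboundedUnder_flip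
    (isBoundedUnder_le_of_abs_le fun n =>
      abs_orbitAverage_le (fun ω => abs_tailSup_le (h0 · ω) (hC · ω) N) (F n) ω)
  filter_upwards [eventually_ge_atTop N] with n hn
  exact orbitAverage_mono (fun ω => le_tailSup (hC · ω) hn) (F n) ω

end Pointwise

lemma orbitAverage_add [DecidableEq G] [AddMonoid G] [AddAction G Ω] {s t : Finset G}
    (hst : Set.InjOn (fun p : G × G => p.1 + p.2) (s ×ˢ t : Finset (G × G))) (f : Ω → ℝ) :
    orbitAverage (s + t) f = orbitAverage t (orbitAverage s f) := by
  ext ω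
  simp only [orbitAverage]
  rw [← Finset.image_add_product, Finset.expect_image hst, Finset.expect_product,
    Finset.expect_comm]
  simp only [add_vadd]

lemma sum_Ico_neg_self {M : Type*} [AddCommMonoid M] (h : ℤ → M) (n : ℕ) :
    ∑ j ∈ Finset.Ico (-(n : ℤ)) n, h j =
      ∑ k ∈ Finset.range n, h k + ∑ k ∈ Finset.range n, h (-(k + 1)) := by
  induction n with
  | zero => simp
  | succ n ih =>
    have hIco : Finset.Ico (-((n + 1 : ℕ) : ℤ)) (n + 1 : ℕ) =
        insert (n : ℤ) (insert (-(n + 1 : ℤ)) (Finset.Ico (-(n : ℤ)) n)) := by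
      ext j
      simp only [Finset.mem_insert, Finset.mem_Ico]
      omega
    rw [hIco, Finset.sum_insert (by simp; omega), Finset.sum_insert (by simp), ih,
      Finset.sum_range_succ, Finset.sum_range_succ]
    abel

lemma orbitAverage_map_Ico [AddGroup G] [AddAction G Ω] {φ : ℤ →+ G}
    (hφ : Function.Injective φ) (f : Ω → ℝ) (n : ℕ) (ω : Ω) :
    orbitAverage ((Finset.Ico (-(n : ℤ)) n).map ⟨φ, hφ⟩) f ω =
      (2 : ℝ)⁻¹ * (birkhoffAverage ℝ (φ 1 +ᵥ ·) f n ω +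
        birkhoffAverage ℝ (φ (-1) +ᵥ ·) (fun ω => f (φ (-1) +ᵥ ω)) n ω) := by
  have hcard : ((Finset.Ico (-(n : ℤ)) n).card : ℝ)⁻¹ = 2⁻¹ * (n : ℝ)⁻¹ := by
    rw [Int.card_Ico, ← mul_inv, show ((n : ℤ) - -n).toNat = 2 * n by omega]
    push_cast
    rfl
  have hiter (j : ℤ) (k : ℕ) : (φ j +ᵥ ·)^[k] ω = φ (k * j) +ᵥ ω := by
    rw [vadd_iterate, ← map_nsmul, nsmul_eq_mul]
  rw [orbitAverage_eq_inv_card_mul, Finset.card_map, Finset.sum_map, hcard, sum_Ico_neg_self,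
    mul_assoc, mul_add]
  simp only [birkhoffAverage, birkhoffSum, hiter, smul_eq_mul, Function.Embedding.coeFn_mk,
    mul_one, vadd_vadd, ← map_add]
  have hindex (k : ℕ) : -((k : ℤ) + 1) = -1 + k * -1 := by ring
  simp only [hindex]

lemma abs_orbitAverage_vadd_sub_le [AddGroup G] [AddAction G Ω] {f : Ω → ℝ} {C : ℝ}
    (hC : ∀ ω, |f ω| ≤ C) {s t : Finset G} {y : G} (hst : s ⊆ t)
    (hyst : s.map (addRightEmbedding y) ⊆ t) (ω : Ω) :
    |orbitAverage s f (y +ᵥ ω) - orbitAverage s f ω| ≤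
      (s.card : ℝ)⁻¹ * (2 * C * (t.card - s.card)) := by
  have hsum : ∑ x ∈ s, f (x +ᵥ y +ᵥ ω) = ∑ x ∈ s.map (addRightEmbedding y), f (x +ᵥ ω) := by
    simp only [Finset.sum_map, addRightEmbedding_apply, add_vadd]
  have hs := abs_sum_sub_sum_le hst (g := fun x => f (x +ᵥ ω)) fun x => hC (x +ᵥ ω)
  have hys := abs_sum_sub_sum_le hyst (g := fun x => f (x +ᵥ ω)) fun x => hC (x +ᵥ ω)
  rw [Finset.card_map] at hys
  rw [orbitAverage_eq_inv_card_mul, orbitAverage_eq_inv_card_mul, hsum, ← mul_sub, abs_mul,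
    abs_of_nonneg (inv_nonneg.2 (Nat.cast_nonneg _))]
  refine mul_le_mul_of_nonneg_left ?_ (inv_nonneg.2 (Nat.cast_nonneg _))
  rw [abs_le] at hs hys ⊢
  constructor <;> linarith

lemma orbitLimsup_latticeBox_vadd {ι : Type*} [Fintype ι] [DecidableEq ι]
    [AddAction (ι → ℤ) Ω] {f : Ω → ℝ} {C : ℝ} (hC : ∀ ω, |f ω| ≤ C) (y : ι → ℤ) (ω : Ω) :
    orbitLimsup (latticeBox ι) f (y +ᵥ ω) = orbitLimsup (latticeBox ι) f ω := by
  refine limsup_eq_limsup_of_sub_tendsto_zero (fun n => abs_orbitAverage_le hC _ _)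
    (fun n => abs_orbitAverage_le hC _ _) ?_
  obtain ⟨m, hm⟩ := exists_map_addRight_latticeBox_subset y
  refine squeeze_zero_norm (fun n => abs_orbitAverage_vadd_sub_le hC
    (latticeBox_mono (Nat.le_add_right n m)) (hm n) ω) ?_
  have hratio := ((tendsto_card_latticeBox_add_div (ι := ι) m).sub_const 1).const_mul (2 * C)
  rw [sub_self, mul_zero] at hratio
  refine hratio.congr' ?_
  filter_upwards [eventually_gt_atTop 0] with n hn
  have hpos : ((latticeBox ι n).card : ℝ) ≠ 0 := by
    rw [card_latticeBox]
    positivity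
  field_simp

variable [MeasurableSpace Ω] {μ : Measure Ω}

section Measurable

variable [VAdd G Ω] [MeasurableConstVAdd G Ω] {f : Ω → ℝ} {C : ℝ}

lemma measurable_orbitAverage (hf : Measurable f) (s : Finset G) :
    Measurable (orbitAverage s f) := by
  simp only [funext (orbitAverage_eq_inv_card_mul s f)]
  exact (Finset.measurable_fun_sum s fun x _ => hf.comp (measurable_const_vadd x)).const_mul _

lemma integral_orbitAverage [VAddInvariantMeasure G Ω μ] (hf : Integrable f μ) {s : Finset G}
    (hs : s.Nonempty) : ∫ ω, orbitAverage s f ω ∂μ = ∫ ω, f ω ∂μ := by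
  have hmp (x : G) := measurePreserving_vadd x μ
  have hterm (x : G) : ∫ ω, f (x +ᵥ ω) ∂μ = ∫ ω, f ω ∂μ :=
    integral_comp_of_measurePreserving (hmp x) hf.1
  have hint (x : G) : Integrable (fun ω => f (x +ᵥ ω)) μ :=
    (hmp x).integrable_comp_of_integrable hf
  simp only [orbitAverage_eq_inv_card_mul, integral_const_mul]
  simp only [integral_finsetSum s fun x _ => hint x, hterm, Finset.sum_const, nsmul_eq_mul]
  exact inv_mul_cancel_left₀ (by exact_mod_cast hs.card_pos.ne') _

end Measurable

/-- The averages along the windows `F n` of every bounded measurable observable converge almost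
everywhere; the windows are eventually nonempty, so that averages keep the integral. -/
structure HasErgodicLimits [VAdd G Ω] (F : ℕ → Finset G) (μ : Measure Ω) : Prop where
  eventually_nonempty : ∀ᶠ n in atTop, (F n).Nonempty
  ae_exists_tendsto : ∀ (f : Ω → ℝ) (C : ℝ), Measurable f → (∀ ω, |f ω| ≤ C) →
    ∀ᵐ ω ∂μ, ∃ c, Tendsto (fun n => orbitAverage (F n) f ω) atTop (𝓝 c)

section Limsup

variable [VAdd G Ω] {F : ℕ → Finset G} {f : Ω → ℝ} {C : ℝ}

lemma HasErgodicLimits.ae_tendsto_orbitLimsup (hF : HasErgodicLimits F μ) (hf : Measurable f)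
    (hC : ∀ ω, |f ω| ≤ C) :
    ∀ᵐ ω ∂μ, Tendsto (fun n => orbitAverage (F n) f ω) atTop (𝓝 (orbitLimsup F f ω)) := by
  filter_upwards [hF.ae_exists_tendsto f C hf hC] with ω ⟨c, hc⟩
  rwa [orbitLimsup, hc.limsup_eq]

variable [MeasurableConstVAdd G Ω]

lemma measurable_orbitLimsup (hf : Measurable f) : Measurable (orbitLimsup F f) :=
  Measurable.limsup fun n => measurable_orbitAverage hf (F n)

variable [IsFiniteMeasure μ] [VAddInvariantMeasure G Ω μ]

lemma HasErgodicLimits.integral_orbitLimsup (hF : HasErgodicLimits F μ) (hf : Measurable f)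
    (hC : ∀ ω, |f ω| ≤ C) : ∫ ω, orbitLimsup F f ω ∂μ = ∫ ω, f ω ∂μ := by
  refine tendsto_nhds_unique (tendsto_integral_of_dominated_convergence (fun _ => C)
    (fun n => (measurable_orbitAverage hf (F n)).aestronglyMeasurable) (integrable_const C)
    (fun n => ae_of_all _ (abs_orbitAverage_le hC (F n))) (hF.ae_tendsto_orbitLimsup hf hC))
    (tendsto_const_nhds.congr' ?_)
  filter_upwards [hF.eventually_nonempty] with n hn
  exact (integral_orbitAverage (integrable_of_abs_le hf hC) hn).symm

lemma HasErgodicLimits.ae_tendsto_zero {u : ℕ → Ω → ℝ} (hF : HasErgodicLimits F μ)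
    (hu : ∀ n, Measurable (u n)) (h0 : ∀ n, 0 ≤ u n) (hC : ∀ n ω, u n ω ≤ C)
    (hlim : ∀ᵐ ω ∂μ, Tendsto (fun n => u n ω) atTop (𝓝 0)) :
    ∀ᵐ ω ∂μ, Tendsto (fun n => orbitAverage (F n) (u n) ω) atTop (𝓝 0) := by
  set env : ℕ → Ω → ℝ := fun N ω => tailSup (u · ω) N
  set top : Ω → ℝ := fun ω => limsup (fun n => orbitAverage (F n) (u n) ω) atTop
  have henv_meas (N : ℕ) : Measurable (env N) := Measurable.iSup fun m => hu (N + m)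
  have henv_le (N : ℕ) (ω : Ω) : |env N ω| ≤ C := abs_tailSup_le (h0 · ω) (hC · ω) N
  have hav_le (n : ℕ) (ω : Ω) : |orbitAverage (F n) (u n) ω| ≤ C :=
    abs_orbitAverage_le (fun ω => (abs_of_nonneg (h0 n ω)).trans_le (hC n ω)) (F n) ω
  have htop_int : Integrable top μ :=
    integrable_of_abs_le (Measurable.limsup fun n => measurable_orbitAverage (hu n) _)
      fun ω => abs_limsup_le (hav_le · ω)
  have htop_nonneg : 0 ≤ top := fun ω => le_limsup_of_frequently_le
    (Frequently.of_forall fun n => orbitAverage_nonneg (h0 n) (F n) ω)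
    (isBoundedUnder_le_of_abs_le (hav_le · ω))
  have hint_le (N : ℕ) : ∫ ω, top ω ∂μ ≤ ∫ ω, env N ω ∂μ := by
    rw [← hF.integral_orbitLimsup (henv_meas N) (henv_le N)]
    exact integral_mono htop_int (integrable_of_abs_le (measurable_orbitLimsup (henv_meas N))
      (abs_orbitLimsup_le (henv_le N))) (limsup_orbitAverage_le_orbitLimsup_tailSup h0 hC N)
  have hint_env : Tendsto (fun N => ∫ ω, env N ω ∂μ) atTop (𝓝 0) := by
    simpa only [integral_zero] using tendsto_integral_of_dominated_convergence (fun _ => C)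
      (fun N => (henv_meas N).aestronglyMeasurable) (integrable_const C)
      (fun N => ae_of_all _ (henv_le N))
      (hlim.mono fun ω hω => tendsto_tailSup_zero (h0 · ω) (hC · ω) hω)
  have hint_top : ∫ ω, top ω ∂μ = 0 :=
    (ge_of_tendsto' hint_env hint_le).antisymm (integral_nonneg htop_nonneg)
  filter_upwards [(integral_eq_zero_iff_of_nonneg htop_nonneg htop_int).1 hint_top] with ω hω
  exact tendsto_of_le_liminf_of_limsup_le
    (le_liminf_of_le (isBoundedUnder_le_of_abs_le (hav_le · ω)).isCoboundedUnder_flip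
      (.of_forall fun n => orbitAverage_nonneg (h0 n) (F n) ω))
    hω.le (isBoundedUnder_le_of_abs_le (hav_le · ω)) (isBoundedUnder_ge_of_abs_le (hav_le · ω))

end Limsup

theorem HasErgodicLimits.add [DecidableEq G] [AddMonoid G] [AddAction G Ω]
    [MeasurableConstVAdd G Ω] [IsFiniteMeasure μ] [VAddInvariantMeasure G Ω μ]
    {F F' : ℕ → Finset G} (hF : HasErgodicLimits F μ) (hF' : HasErgodicLimits F' μ)
    (hinj : ∀ n, Set.InjOn (fun p : G × G => p.1 + p.2) (F n ×ˢ F' n : Finset (G × G))) :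
    HasErgodicLimits (fun n => F n + F' n) μ where
  eventually_nonempty := by
    filter_upwards [hF.eventually_nonempty, hF'.eventually_nonempty] with n hn hn'
    exact hn.add hn'
  ae_exists_tendsto f C hf hC := by
    set inner : ℕ → Ω → ℝ := fun n => orbitAverage (F n) f
    set lim : Ω → ℝ := orbitLimsup F f
    have hlim_meas : Measurable lim := measurable_orbitLimsup hf
    have herr : ∀ᵐ ω ∂μ, Tendsto
        (fun n => orbitAverage (F' n) (fun ω => |(inner n - lim) ω|) ω) atTop (𝓝 0) := by
      refine hF'.ae_tendsto_zero (C := 2 * C)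
        (fun n => ((measurable_orbitAverage hf _).sub hlim_meas).abs) (fun n ω => abs_nonneg _)
        (fun n ω => ?_) ?_
      · exact (abs_sub _ _).trans (by
          linarith [abs_orbitAverage_le hC (F n) ω, abs_orbitLimsup_le (F := F) hC ω])
      · filter_upwards [hF.ae_tendsto_orbitLimsup hf hC] with ω hω
        exact abs_zero (α := ℝ) ▸ (tendsto_sub_nhds_zero_iff.2 hω).abs
    filter_upwards [herr, hF'.ae_tendsto_orbitLimsup hlim_meas (abs_orbitLimsup_le hC)]
      with ω herrω hlimω
    have hdiff : Tendsto (fun n => orbitAverage (F' n) (inner n - lim) ω) atTop (𝓝 0) :=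
      squeeze_zero_norm (fun n => abs_orbitAverage_le_orbitAverage_abs _ _ _) herrω
    refine ⟨_, (hdiff.add hlimω).congr fun n => ?_⟩
    rw [orbitAverage_add (hinj n), orbitAverage_sub, Pi.sub_apply, sub_add_cancel]

theorem hasErgodicLimits_map_Ico [AddGroup G] [AddAction G Ω] [MeasurableConstVAdd G Ω]
    [IsFiniteMeasure μ] [VAddInvariantMeasure G Ω μ] {φ : ℤ →+ G} (hφ : Function.Injective φ) :
    HasErgodicLimits (fun n : ℕ => (Finset.Ico (-(n : ℤ)) n).map ⟨φ, hφ⟩) μ where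
  eventually_nonempty := by
    filter_upwards [eventually_gt_atTop 0] with n hn
    exact (Finset.nonempty_Ico.2 (by omega)).map
  ae_exists_tendsto f C hf hC := by
    filter_upwards [ae_exists_tendsto_birkhoffAverage (measurePreserving_vadd (φ 1) μ) hf hC,
      ae_exists_tendsto_birkhoffAverage (measurePreserving_vadd (φ (-1)) μ)
        (hf.comp (measurable_const_vadd (φ (-1)))) fun ω => hC (φ (-1) +ᵥ ω)] with ω ⟨a, ha⟩ ⟨b, hb⟩
    exact ⟨_, ((ha.add hb).const_mul 2⁻¹).congr fun n => (orbitAverage_map_Ico hφ f n ω).symm⟩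

section Box

variable {ι : Type*} [Fintype ι] [DecidableEq ι] [AddAction (ι → ℤ) Ω]
  [MeasurableConstVAdd (ι → ℤ) Ω]

lemma hasErgodicLimits_partialBox [IsFiniteMeasure μ] [VAddInvariantMeasure (ι → ℤ) Ω μ]
    (s : Finset ι) : HasErgodicLimits (partialBox s) μ := by
  induction s using Finset.induction_on with
  | empty =>
    simp only [funext (partialBox_empty (ι := ι))]
    exact ⟨.of_forall fun _ => Finset.singleton_nonempty 0,
      fun f _ _ _ => ae_of_all _ fun ω => ⟨_, tendsto_const_nhds⟩⟩
  | insert i s hi ih =>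
    simp only [funext (partialBox_insert hi)]
    exact (hasErgodicLimits_map_Ico _).add ih (injOn_add_axisSegment_partialBox hi)

theorem ae_tendsto_orbitAverage_latticeBox [IsProbabilityMeasure μ] [ErgodicVAdd (ι → ℤ) Ω μ]
    {f : Ω → ℝ} {C : ℝ} (hf : Measurable f) (hC : ∀ ω, |f ω| ≤ C) :
    ∀ᵐ ω ∂μ, Tendsto (fun n => orbitAverage (latticeBox ι n) f ω) atTop (𝓝 (∫ ω, f ω ∂μ)) := by
  have hbox : HasErgodicLimits (latticeBox ι) μ :=
    (funext partialBox_univ : partialBox Finset.univ = latticeBox ι) ▸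
      hasErgodicLimits_partialBox Finset.univ
  obtain ⟨c, hc⟩ : ∃ c, orbitLimsup (latticeBox ι) f =ᵐ[μ] fun _ => c := by
    refine exists_eventuallyEq_const_of_forall_separating MeasurableSet fun U hU => ?_
    have hpre := aeconst_of_forall_preimage_vadd_ae_eq (ι → ℤ) (μ := μ)
      (s := orbitLimsup (latticeBox ι) f ⁻¹' U)
      (measurable_orbitLimsup hf hU).nullMeasurableSet fun y =>
        .of_forall fun ω => congrArg (· ∈ U) (orbitLimsup_latticeBox_vadd hC y ω)
    exact eventuallyConst_set.1 hpre
  have hcint : c = ∫ ω, f ω ∂μ := by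
    rw [← hbox.integral_orbitLimsup hf hC, integral_congr_ae hc, integral_const, probReal_univ,
      one_smul]
  filter_upwards [hbox.ae_tendsto_orbitLimsup hf hC, hc] with ω hω hcω
  rwa [hcω, hcint] at hω

end Box

end OrbitAverage

/-! ### Ranks of spans over a Noetherian domain -/

section Rank

variable {R M : Type*} [CommRing R] [AddCommGroup M] [Module R M]

/-- `v` is a torsion element modulo `N`: over `ℤ`, it depends rationally on elements of `N`. -/
def IsTorsionMod (v : M) (N : Submodule R M) : Prop := ∃ r : R, r ≠ 0 ∧ r • v ∈ N

lemma IsTorsionMod.mono {v : M} {N N' : Submodule R M} (hv : IsTorsionMod v N) (h : N ≤ N') :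
    IsTorsionMod v N' :=
  hv.imp fun _ hr => hr.imp_right (@h _)

lemma IsTorsionMod.map {M' : Type*} [AddCommGroup M'] [Module R M'] {v : M} {N : Submodule R M}
    (hv : IsTorsionMod v N) (φ : M →ₗ[R] M') : IsTorsionMod (φ v) (N.map φ) := by
  obtain ⟨r, hr, hrv⟩ := hv
  exact ⟨r, hr, map_smul φ r v ▸ Submodule.mem_map_of_mem hrv⟩

lemma isTorsionMod_span_image_iff_exists_finset {α : Type*} {f : α → M} {S : Set α} {v : M} :
    IsTorsionMod v (Submodule.span R (f '' S)) ↔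
      ∃ F : Finset α, ↑F ⊆ S ∧ IsTorsionMod v (Submodule.span R (f '' F)) := by
  classical
  refine ⟨fun ⟨r, hr, hrv⟩ => ?_, fun ⟨F, hFS, hF⟩ => hF.mono (Submodule.span_mono
    (Set.image_mono hFS))⟩
  obtain ⟨G, hGS, hvG⟩ := Submodule.mem_span_finite_of_mem_span hrv
  obtain ⟨F, hFS, rfl⟩ := Finset.subset_set_image_iff.1 hGS
  exact ⟨F, hFS, r, hr, Finset.coe_image (f := f) ▸ hvG⟩

lemma inf_span_singleton_eq_bot {N : Submodule R M} {v : M} (hv : ¬ IsTorsionMod v N) :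
    N ⊓ Submodule.span R {v} = ⊥ := by
  rw [Submodule.eq_bot_iff]
  rintro x ⟨hxN, hxv⟩
  obtain ⟨r, rfl⟩ := Submodule.mem_span_singleton.1 hxv
  by_cases hr : r = 0
  · rw [hr, zero_smul]
  · exact absurd ⟨r, hr, hxN⟩ hv

lemma finite_span_image_coe {α : Type*} {v : α → M} (S : Finset α) :
    Module.Finite R (Submodule.span R (v '' S)) :=
  Module.Finite.span_of_finite R (S.finite_toSet.image v)

variable [IsDomain R]

lemma isTorsionMod_zero (N : Submodule R M) : IsTorsionMod 0 N :=
  ⟨1, one_ne_zero, by rw [smul_zero]; exact N.zero_mem⟩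

lemma finrank_span_singleton_of_ne_zero [Module.IsTorsionFree R M] {v : M} (hv : v ≠ 0) :
    Module.finrank R (Submodule.span R {v}) = 1 := by
  rw [← (LinearEquiv.toSpanNonzeroSingleton R M v hv).finrank_eq, Module.finrank_self]

lemma finrank_quotient_comap_add_finrank {B Z : Submodule R M} [Module.Finite R Z] (hBZ : B ≤ Z) :
    Module.finrank R (Z ⧸ B.comap Z.subtype) + Module.finrank R B = Module.finrank R Z := by
  rw [← (Submodule.comapSubtypeEquivOfLe hBZ).finrank_eq, Submodule.finrank_quotient_add_finrank]

lemma finrank_inf_ker_add_finrank_map {M' : Type*} [AddCommGroup M'] [Module R M']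
    (φ : M →ₗ[R] M') (N : Submodule R M) [Module.Finite R N] :
    Module.finrank R (N ⊓ LinearMap.ker φ : Submodule R M) + Module.finrank R (N.map φ) =
      Module.finrank R N := by
  have hker : LinearMap.ker (φ.domRestrict N) = (N ⊓ LinearMap.ker φ).comap N.subtype := by
    rw [LinearMap.ker_domRestrict, Submodule.comap_inf, Submodule.comap_subtype_self, top_inf_eq]
  rw [← (Submodule.comapSubtypeEquivOfLe inf_le_left).finrank_eq, ← hker,
    ← LinearMap.range_domRestrict, ← (φ.domRestrict N).quotKerEquivRange.finrank_eq, add_comm,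
    Submodule.finrank_quotient_add_finrank]

lemma finrank_image_mono {α : Type*} {v : α → M} {S T : Finset α} (hST : S ⊆ T) :
    (v '' S).finrank R ≤ (v '' T).finrank R := by
  have := finite_span_image_coe (R := R) (v := v) T
  exact Submodule.finrank_mono (Submodule.span_mono (Set.image_mono (Finset.coe_subset.2 hST)))

variable [IsNoetherianRing R]

lemma finrank_sup_add_finrank_inf (N N' : Submodule R M) [Module.Finite R N]
    [Module.Finite R N'] :
    Module.finrank R (N ⊔ N' : Submodule R M) + Module.finrank R (N ⊓ N' : Submodule R M) =
      Module.finrank R N + Module.finrank R N' := by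
  have : Module.Finite R (N ⊓ N' : Submodule R M) :=
    Module.Finite.of_injective (Submodule.inclusion inf_le_left)
      (Submodule.inclusion_injective (inf_le_left : N ⊓ N' ≤ N))
  have hrank := Submodule.rank_sup_add_rank_inf_eq N N'
  simp only [← Module.finrank_eq_rank] at hrank
  exact_mod_cast hrank

variable [Module.IsTorsionFree R M]

lemma finrank_inf_span_singleton_of_isTorsionMod {N : Submodule R M} {v : M}
    (hv : IsTorsionMod v N) :
    Module.finrank R (N ⊓ Submodule.span R {v} : Submodule R M) =
      Module.finrank R (Submodule.span R {v}) := by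
  refine (Submodule.finrank_mono inf_le_right).antisymm ?_
  obtain ⟨r, hr, hrv⟩ := hv
  rcases eq_or_ne v 0 with rfl | hv0
  · rw [Submodule.span_zero_singleton, finrank_bot]
    exact Nat.zero_le _
  have : Module.Finite R (N ⊓ Submodule.span R {v} : Submodule R M) :=
    Module.Finite.of_injective (Submodule.inclusion inf_le_right)
      (Submodule.inclusion_injective (inf_le_right : N ⊓ Submodule.span R {v} ≤ _))
  have hle : Submodule.span R {r • v} ≤ N ⊓ Submodule.span R {v} :=
    (Submodule.span_singleton_le_iff_mem _ _).2
      ⟨hrv, Submodule.smul_mem _ r (Submodule.mem_span_singleton_self v)⟩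
  rw [finrank_span_singleton_of_ne_zero hv0,
    ← finrank_span_singleton_of_ne_zero (R := R) (smul_ne_zero hr hv0)]
  exact Submodule.finrank_mono hle

open Classical in
lemma finrank_sup_span_singleton (N : Submodule R M) [Module.Finite R N] (v : M) :
    Module.finrank R (N ⊔ Submodule.span R {v} : Submodule R M) =
      Module.finrank R N + if IsTorsionMod v N then 0 else 1 := by
  have hsup := finrank_sup_add_finrank_inf N (Submodule.span R {v})
  split_ifs with hv
  · rw [finrank_inf_span_singleton_of_isTorsionMod hv] at hsup
    omega
  · have hv0 : v ≠ 0 := fun h => hv (h ▸ isTorsionMod_zero N)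
    rw [inf_span_singleton_eq_bot hv, finrank_bot, finrank_span_singleton_of_ne_zero hv0] at hsup
    exact hsup

variable {α : Type*} {v : α → M}

open Classical in
lemma finrank_image_insert (S : Finset α) (a : α) :
    (v '' (insert a S : Finset α)).finrank R = (v '' S).finrank R +
      if IsTorsionMod (v a) (Submodule.span R (v '' S)) then 0 else 1 := by
  have := finite_span_image_coe (R := R) (v := v) S
  rw [Set.finrank, Set.finrank, ← finrank_sup_span_singleton, Finset.coe_insert,
    Set.image_insert_eq, Submodule.span_insert, sup_comm]

open Classical in
lemma finrank_image_union_le (S T : Finset α) :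
    (v '' (T ∪ S : Finset α)).finrank R ≤ (v '' S).finrank R + T.card := by
  induction T using Finset.induction_on with
  | empty => simp
  | insert a T ha ih =>
    rw [Finset.insert_union, finrank_image_insert, Finset.card_insert_of_notMem ha]
    split_ifs <;> omega

lemma finrank_image_le_add_card_sub {S T : Finset α} (hST : S ⊆ T) :
    (v '' T).finrank R ≤ (v '' S).finrank R + (T.card - S.card) := by
  classical
  rw [← Finset.card_sdiff_of_subset hST]
  simpa only [Finset.sdiff_union_of_subset hST] using finrank_image_union_le (v := v) S (T \ S)

open Classical in
theorem finrank_image_eq_card_filter {κ : Type*} [LinearOrder κ] {key : α → κ}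
    (hkey : Function.Injective key) (S : Finset α) :
    (v '' S).finrank R = (S.filter fun a =>
      ¬ IsTorsionMod (v a) (Submodule.span R (v '' {b | b ∈ S ∧ key b < key a}))).card := by
  induction S using Finset.induction_on_max_value key with
  | empty =>
    rw [Finset.coe_empty, Set.image_empty, Set.finrank_empty, Finset.filter_empty,
      Finset.card_empty]
  | insert a S ha hmax ih =>
    have hlt : ∀ b ∈ S, key b < key a := fun b hb =>
      (hmax b hb).lt_of_ne fun h => ha (hkey h ▸ hb)
    have hbelow_a : {b | b ∈ insert a S ∧ key b < key a} = (S : Set α) := by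
      ext b
      simp only [Set.mem_ofPred_eq, Finset.mem_insert, Finset.mem_coe]
      exact ⟨fun h => h.1.resolve_left fun hba => h.2.ne (congrArg key hba),
        fun h => ⟨Or.inr h, hlt b h⟩⟩
    have hbelow : ∀ c ∈ S,
        {b | b ∈ insert a S ∧ key b < key c} = {b | b ∈ S ∧ key b < key c} := by
      intro c hc
      ext b
      simp only [Set.mem_ofPred_eq, Finset.mem_insert]
      exact ⟨fun h => ⟨h.1.resolve_left fun hba => (h.2.trans (hlt c hc)).ne (congrArg key hba),
        h.2⟩, fun h => ⟨Or.inr h.1, h.2⟩⟩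
    rw [finrank_image_insert, ih, Finset.card_filter, Finset.card_filter, Finset.sum_insert ha,
      hbelow_a, add_comm, ite_not]
    refine congrArg _ (Finset.sum_congr rfl fun c hc => ?_)
    rw [hbelow c hc]

end Rank

/-! ### The cubical chain complex -/

section Cube

variable {d : ℕ}

lemma boundaryCube_cons (a : ℤ × Bool) (R : ElemCube d) :
    boundaryCube (d + 1) (Fin.cons a R) =
      (if a.2 then
          Finsupp.single (Fin.cons (a.1 + 1, false) R) (1 : ℤ)
            - Finsupp.single (Fin.cons (a.1, false) R) (1 : ℤ)
        else 0)
      + (if a.2 then (-1 : ℤ) else 1) • Finsupp.mapDomain (Fin.cons a) (boundaryCube d R) :=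
  rfl

lemma boundaryHom_single (Q : ElemCube d) (n : ℤ) :
    boundaryHom d (Finsupp.single Q n) = n • boundaryCube d Q := by
  simp [boundaryHom]

lemma boundaryHom_mapDomain_cons (a : ℤ × Bool) (c : CubChain d) :
    boundaryHom (d + 1) (Finsupp.mapDomain (Fin.cons a) c) =
      (if a.2 then Finsupp.mapDomain (Fin.cons (a.1 + 1, false)) c -
        Finsupp.mapDomain (Fin.cons (a.1, false)) c else 0) +
      (if a.2 then (-1 : ℤ) else 1) • Finsupp.mapDomain (Fin.cons a) (boundaryHom d c) := by
  induction c using Finsupp.induction_linear with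
  | zero => simp
  | add f g hf hg =>
    simp only [Finsupp.mapDomain_add, map_add, hf, hg]
    split_ifs <;> module
  | single R n =>
    simp only [Finsupp.mapDomain_single, boundaryHom_single, boundaryCube_cons,
      Finsupp.mapDomain_smul]
    split_ifs
    · simp only [smul_add, smul_sub, Finsupp.smul_single, smul_eq_mul, mul_one]
      module
    · simp

lemma boundaryHom_boundaryCube (Q : ElemCube d) : boundaryHom d (boundaryCube d Q) = 0 := by
  induction Q using Fin.consInduction with
  | elim0 => exact map_zero _
  | cons a R ih =>
    have hsingle (b : ℤ × Bool) : Finsupp.single (Fin.cons b R : ElemCube _) (1 : ℤ) =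
        Finsupp.mapDomain (Fin.cons b) (Finsupp.single R 1) :=
      Finsupp.mapDomain_single.symm
    rw [boundaryCube_cons, hsingle, hsingle]
    split_ifs with ha
    · rw [map_add, map_sub, map_smul]
      simp [-Finsupp.mapDomain_single, boundaryHom_mapDomain_cons, boundaryHom_single, ih, ha]
    · simp [boundaryHom_mapDomain_cons, ih, ha]

/-- The face relation between elementary cubes, in terms of the end points of their components;
it amounts to inclusion of the geometric realizations. -/
def IsFace (Q Q' : ElemCube d) : Prop := ∀ i, (Q' i).1 ≤ (Q i).1 ∧
  (Q i).1 + (if (Q i).2 then 1 else 0) ≤ (Q' i).1 + (if (Q' i).2 then 1 else 0)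

/-- The faces of codimension one of an elementary cube. -/
def facets (Q : ElemCube d) : Set (ElemCube d) := {R | cubeDim R + 1 = cubeDim Q ∧ IsFace R Q}

lemma IsFace.refl (Q : ElemCube d) : IsFace Q Q := fun _ => ⟨le_rfl, le_rfl⟩

lemma isFace_cons {a b : ℤ × Bool} {R S : ElemCube d} :
    IsFace (Fin.cons a R : ElemCube (d + 1)) (Fin.cons b S : ElemCube (d + 1)) ↔
      (b.1 ≤ a.1 ∧ a.1 + (if a.2 then 1 else 0) ≤ b.1 + (if b.2 then 1 else 0)) ∧ IsFace R S := by
  simp only [IsFace, Fin.forall_fin_succ, Fin.cons_zero, Fin.cons_succ]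

lemma cubeDim_cons (a : ℤ × Bool) (R : ElemCube d) :
    cubeDim (Fin.cons a R : ElemCube (d + 1)) = (if a.2 then 1 else 0) + cubeDim R := by
  simp only [cubeDim, Finset.card_filter, Fin.sum_univ_succ, Fin.cons_zero, Fin.cons_succ]

lemma cons_mem_facets_of_true {a : ℤ × Bool} (ha : a.2 = true) (R : ElemCube d) {l : ℤ}
    (hl : l = a.1 ∨ l = a.1 + 1) :
    (Fin.cons (l, false) R : ElemCube (d + 1)) ∈ facets (Fin.cons a R : ElemCube (d + 1)) := by
  refine ⟨?_, isFace_cons.2 ⟨?_, .refl R⟩⟩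
  · simp [cubeDim_cons, ha, add_comm]
  · simp only [ha, if_true]
    rcases hl with rfl | rfl <;> simp

lemma cons_mem_facets {R S : ElemCube d} (hRS : R ∈ facets S) (a : ℤ × Bool) :
    (Fin.cons a R : ElemCube (d + 1)) ∈ facets (Fin.cons a S : ElemCube (d + 1)) :=
  ⟨by rw [cubeDim_cons, cubeDim_cons, add_assoc, hRS.1], isFace_cons.2 ⟨⟨le_rfl, le_rfl⟩, hRS.2⟩⟩

lemma boundaryCube_mem_supported_facets (Q : ElemCube d) :
    boundaryCube d Q ∈ Finsupp.supported ℤ ℤ (facets Q) := by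
  induction Q using Fin.consInduction with
  | elim0 => exact Submodule.zero_mem _
  | cons a R ih =>
    rw [boundaryCube_cons]
    refine Submodule.add_mem _ ?_ (Submodule.smul_mem _ _ ?_)
    · split_ifs with ha
      · exact Submodule.sub_mem _
          (Finsupp.single_mem_supported ℤ _ (cons_mem_facets_of_true ha R (Or.inr rfl)))
          (Finsupp.single_mem_supported ℤ _ (cons_mem_facets_of_true ha R (Or.inl rfl)))
      · exact Submodule.zero_mem _
    · have hmap := Submodule.mem_map_of_mem
        (f := Finsupp.lmapDomain ℤ ℤ (Fin.cons (α := fun _ => ℤ × Bool) a)) ih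
      rw [Finsupp.lmapDomain_supported] at hmap
      refine Finsupp.supported_mono ?_ hmap
      rintro _ ⟨S, hS, rfl⟩
      exact cons_mem_facets hS a

lemma IsFace.cubeSet_subset {Q Q' : ElemCube d} (h : IsFace Q Q') : cubeSet Q ⊆ cubeSet Q' := by
  intro x hx i
  obtain ⟨hlow, hupp⟩ := h i
  have hupp' : ((Q i).1 : ℝ) + (if (Q i).2 then 1 else 0) ≤
      (Q' i).1 + (if (Q' i).2 then 1 else 0) := by exact_mod_cast hupp
  exact ⟨(Int.cast_le.2 hlow).trans (hx i).1, (hx i).2.trans hupp'⟩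

/-- The rank of the group generated by the boundaries of the cubes in `S`. -/
def boundaryRank (S : Set (ElemCube d)) : ℕ := (boundaryCube d '' S).finrank ℤ

/-- The `k`-dimensional elementary cubes contained in `X`, which freely generate `C_k(X)`. -/
def cubesIn (d k : ℕ) (X : Set (Fin d → ℝ)) : Set (ElemCube d) :=
  {Q | cubeDim Q = k ∧ cubeSet Q ⊆ X}

variable {q : ℕ} {X : Set (Fin d → ℝ)}

lemma map_boundaryHom_chainsOn (k : ℕ) (X : Set (Fin d → ℝ)) :
    (chainsOn d k X).map (boundaryHom d) = Submodule.span ℤ (boundaryCube d '' cubesIn d k X) := by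
  rw [chainsOn, Finsupp.supported_eq_span_single, Submodule.map_span, Set.image_image]
  simp only [boundaryHom_single, one_smul, cubesIn]

lemma boundaryMod_le_cycleMod : boundaryMod d q X ≤ cycleMod d q X := by
  rw [boundaryMod, map_boundaryHom_chainsOn, Submodule.span_le]
  rintro _ ⟨Q, ⟨hdim, hQX⟩, rfl⟩
  refine ⟨Finsupp.supported_mono ?_ (boundaryCube_mem_supported_facets Q),
    boundaryHom_boundaryCube Q⟩
  rintro R ⟨hdimR, hRQ⟩
  exact ⟨by omega, hRQ.cubeSet_subset.trans hQX⟩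

lemma finite_chainsOn (hfin : (cubesIn d q X).Finite) : Module.Finite ℤ (chainsOn d q X) :=
  have : Finite (cubesIn d q X) := hfin
  .equiv (Finsupp.supportedEquivFinsupp (M := ℤ) (R := ℤ) (cubesIn d q X)).symm

lemma finrank_chainsOn (hfin : (cubesIn d q X).Finite) :
    Module.finrank ℤ (chainsOn d q X) = (cubesIn d q X).ncard := by
  have := hfin.fintype
  rw [← Nat.card_coe_set_eq, Nat.card_eq_fintype_card, ← Module.finrank_finsupp_self ℤ]
  exact (Finsupp.supportedEquivFinsupp (M := ℤ) (R := ℤ) (cubesIn d q X)).finrank_eq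

theorem betti_add_boundaryRank_add_boundaryRank (hfin : (cubesIn d q X).Finite) :
    betti d q X + boundaryRank (cubesIn d q X) + boundaryRank (cubesIn d (q + 1) X) =
      (cubesIn d q X).ncard := by
  have := finite_chainsOn hfin
  have : Module.Finite ℤ (cycleMod d q X) :=
    Module.Finite.of_injective (Submodule.inclusion inf_le_left)
      (Submodule.inclusion_injective (inf_le_left : cycleMod d q X ≤ chainsOn d q X))
  have hhomology : betti d q X + Module.finrank ℤ (boundaryMod d q X) =
      Module.finrank ℤ (cycleMod d q X) :=
    finrank_quotient_comap_add_finrank boundaryMod_le_cycleMod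
  have hcycles : Module.finrank ℤ (cycleMod d q X) + boundaryRank (cubesIn d q X) =
      (cubesIn d q X).ncard := by
    rw [boundaryRank, Set.finrank, ← map_boundaryHom_chainsOn, ← finrank_chainsOn hfin]
    exact finrank_inf_ker_add_finrank_map (boundaryHom d) (chainsOn d q X)
  rw [boundaryMod, map_boundaryHom_chainsOn] at hhomology
  simp only [boundaryRank, Set.finrank] at hcycles ⊢
  omega

end Cube

section Translate

variable {d : ℕ}

lemma translateCube_cons (x : Fin (d + 1) → ℤ) (a : ℤ × Bool) (R : ElemCube d) :
    translateCube x (Fin.cons a R) =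
      Fin.cons (a.1 + x 0, a.2) (translateCube (fun i => x i.succ) R) := by
  funext i
  refine Fin.cases ?_ (fun i => ?_) i <;> simp [translateCube]

lemma boundaryCube_translateCube (x : Fin d → ℤ) (Q : ElemCube d) :
    boundaryCube d (translateCube x Q) =
      Finsupp.lmapDomain ℤ ℤ (translateCube x) (boundaryCube d Q) := by
  induction Q using Fin.consInduction with
  | elim0 => exact (map_zero _).symm
  | cons a R ih =>
    have hcons : translateCube x ∘ Fin.cons a =
        Fin.cons (a.1 + x 0, a.2) ∘ translateCube (fun i => x i.succ) :=
      funext (translateCube_cons x a)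
    rw [translateCube_cons, boundaryCube_cons, boundaryCube_cons, ih, map_add, map_smul]
    simp only [Finsupp.lmapDomain_apply, ← Finsupp.mapDomain_comp, hcons]
    congr 1
    split_ifs
    · rw [← Finsupp.lmapDomain_apply ℤ ℤ, map_sub]
      simp only [Finsupp.lmapDomain_apply, Finsupp.mapDomain_single, translateCube_cons,
        add_right_comm]
    · rw [Finsupp.mapDomain_zero]

lemma IsTorsionMod.translateCube {Q : ElemCube d} {S : Set (ElemCube d)}
    (hQ : IsTorsionMod (boundaryCube d Q) (Submodule.span ℤ (boundaryCube d '' S)))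
    (x : Fin d → ℤ) :
    IsTorsionMod (boundaryCube d (translateCube x Q))
      (Submodule.span ℤ (boundaryCube d '' (translateCube x '' S))) := by
  rw [boundaryCube_translateCube, Set.image_image]
  simp only [boundaryCube_translateCube]
  rw [← Set.image_image (Finsupp.lmapDomain ℤ ℤ _), ← Submodule.map_span]
  exact hQ.map _

/-- The lexicographic key of an elementary cube; it orders the cubes linearly and compatibly with
translations. -/
def cubeKey (Q : ElemCube d) : Lex (Fin d → ℤ ×ₗ Bool) := toLex fun i => toLex (Q i)

lemma cubeKey_injective : Function.Injective (cubeKey (d := d)) :=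
  fun _ _ h => funext fun i => congrFun h i

lemma cubeKey_lt_iff {Q Q' : ElemCube d} : cubeKey Q < cubeKey Q' ↔
    ∃ i, (∀ j < i, Q j = Q' j) ∧
      ((Q i).1 < (Q' i).1 ∨ (Q i).1 = (Q' i).1 ∧ (Q i).2 < (Q' i).2) :=
  exists_congr fun _ => and_congr_right fun _ => Prod.Lex.toLex_lt_toLex

lemma cubeKey_translateCube_lt_iff (x : Fin d → ℤ) (Q Q' : ElemCube d) :
    cubeKey (translateCube x Q) < cubeKey (translateCube x Q') ↔ cubeKey Q < cubeKey Q' := by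
  simp [cubeKey_lt_iff, translateCube, Prod.ext_iff]

end Translate

/-! ### The translation action on configurations -/

lemma ergodicVAdd_of_forall_invariant {G Ω : Type*} [AddGroup G] [Countable G] [AddAction G Ω]
    [MeasurableSpace Ω] [MeasurableConstVAdd G Ω] {μ : Measure Ω} [IsProbabilityMeasure μ]
    [VAddInvariantMeasure G Ω μ]
    (h : ∀ A : Set Ω, MeasurableSet A → (∀ g : G, (g +ᵥ ·) ⁻¹' A = A) → μ A = 0 ∨ μ A = 1) :
    ErgodicVAdd G Ω μ where
  aeconst_of_forall_preimage_vadd_ae_eq {s} hs hinv := by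
    let A : Set Ω := ⋂ g : G, (g +ᵥ ·) ⁻¹' s
    have hA : MeasurableSet A := .iInter fun g => measurable_const_vadd g hs
    have hAinv (g : G) : (g +ᵥ ·) ⁻¹' A = A := by
      ext ω
      simp only [A, Set.preimage_iInter, Set.mem_iInter, Set.mem_preimage, vadd_vadd]
      exact ⟨fun hω k => by simpa using hω (k - g), fun hω k => hω (k + g)⟩
    have hAs : A =ᵐ[μ] s := by
      simpa only [Set.iInter_const] using Filter.EventuallyEq.countable_iInter hinv
    rw [eventuallyConst_set']
    refine (h A hA hAinv).imp (fun h0 => ?_) fun h1 => ?_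
    · exact hAs.symm.trans (ae_eq_empty.2 h0)
    · exact hAs.symm.trans (ae_eq_univ.2 ((prob_compl_eq_zero_iff hA).2 h1))

section Action

variable {d : ℕ}

lemma translateCube_translateCube (x y : Fin d → ℤ) (Q : ElemCube d) :
    translateCube x (translateCube y Q) = translateCube (x + y) Q :=
  funext fun _ => Prod.ext (by simp only [translateCube, Pi.add_apply]; ring) rfl

lemma translateCube_zero (Q : ElemCube d) : translateCube 0 Q = Q :=
  funext fun _ => Prod.ext (add_zero _) rfl

lemma configShift_apply_translateCube (x : Fin d → ℤ) (ω : Config d) (Q : ElemCube d) :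
    configShift x ω (translateCube x Q) = ω Q := by
  simp only [configShift, translateCube_translateCube, neg_add_cancel, translateCube_zero]

/-- `ℤ^d` acts on configurations by `x ↦ τ_{-x}`, so that `x +ᵥ ω` is `ω` seen from the lattice
point `x`. -/
instance configAddAction : AddAction (Fin d → ℤ) (Config d) where
  vadd x ω := configShift (-x) ω
  zero_vadd ω := funext fun Q => by
    change ω (translateCube (- -0) Q) = ω Q
    rw [neg_zero, neg_zero, translateCube_zero]
  add_vadd x y ω := funext fun Q => by
    change ω (translateCube _ Q) = ω (translateCube _ (translateCube _ Q))
    rw [translateCube_translateCube, neg_neg, neg_neg, neg_neg, add_comm]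

lemma vadd_config_def (x : Fin d → ℤ) (ω : Config d) : x +ᵥ ω = configShift (-x) ω := rfl

instance measurableConstVAdd_config : MeasurableConstVAdd (Fin d → ℤ) (Config d) where
  measurable_const_vadd _ := measurable_pi_lambda _ fun _ => measurable_pi_apply _

lemma ErgodicConfig.ergodicVAdd {P : Measure (Config d)} [IsProbabilityMeasure P]
    (herg : ErgodicConfig P) (hstat : Stationary P) : ErgodicVAdd (Fin d → ℤ) (Config d) P :=
  have : VAddInvariantMeasure (Fin d → ℤ) (Config d) P := ⟨fun x A hA => hstat (-x) A hA⟩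
  ergodicVAdd_of_forall_invariant fun A hA hinv =>
    herg A hA fun x => by simpa only [vadd_config_def, neg_neg] using hinv (-x)

/-- A quantity attached to the cubes of a configuration is covariant if it commutes with
translating the cube and the configuration simultaneously. -/
def IsCovariant {α : Sort*} (H : ElemCube d → Config d → α) : Prop :=
  ∀ x Q ω, H (translateCube x Q) (configShift x ω) = H Q ω

lemma isCovariant_of_imp {p : ElemCube d → Config d → Prop}
    (hp : ∀ x Q ω, p Q ω → p (translateCube x Q) (configShift x ω)) : IsCovariant p := by
  refine fun x Q ω => propext ⟨fun h => ?_, hp x Q ω⟩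
  have hshift : configShift (-x) (configShift x ω) = ω := by
    rw [← vadd_config_def, ← neg_neg x, ← vadd_config_def, neg_neg, vadd_neg_vadd]
  simpa only [translateCube_translateCube, neg_add_cancel, translateCube_zero, hshift]
    using hp (-x) _ _ h

end Action

/-! ### Cubes in boxes -/

section Box

variable {d k n : ℕ}

/-- The corner of an elementary cube with the smallest coordinates. -/
def basePoint (Q : ElemCube d) : Fin d → ℤ := fun i => (Q i).1

/-- The elementary cube with base point `x` which is nondegenerate in the directions `i` with
`b i = true`. -/
def cubeAt (x : Fin d → ℤ) (b : Fin d → Bool) : ElemCube d := fun i => (x i, b i)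

/-- The `k`-element sets of directions, encoded by their indicators. -/
def cubeTypes (d k : ℕ) : Finset (Fin d → Bool) :=
  Finset.univ.filter fun b => (Finset.univ.filter fun i => b i = true).card = k

/-- The `k`-dimensional cubes with base point in the half-open box `[-n, n)^d`. -/
def baseCubes (d k n : ℕ) : Finset (ElemCube d) :=
  (latticeBox (Fin d) n ×ˢ cubeTypes d k).map
    (Equiv.arrowProdEquivProdArrow (Fin d) (fun _ => ℤ) fun _ => Bool).symm.toEmbedding

open Classical in
/-- The `k`-dimensional cubes contained in `Λ_n`. -/
def boxCubes (d k n : ℕ) : Finset (ElemCube d) :=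
  (baseCubes d k (n + 1)).filter fun Q => cubeSet Q ⊆ lambda d n

lemma mem_baseCubes {Q : ElemCube d} :
    Q ∈ baseCubes d k n ↔ cubeDim Q = k ∧ basePoint Q ∈ latticeBox (Fin d) n := by
  rw [baseCubes, Finset.mem_map_equiv, Equiv.symm_symm, Finset.mem_product, and_comm, cubeTypes,
    Finset.mem_filter_univ]
  rfl

lemma baseCubes_mono : Monotone (baseCubes d k) := fun _ _ hmn _ hQ =>
  mem_baseCubes.2 ((mem_baseCubes.1 hQ).imp_right fun h => latticeBox_mono hmn h)

lemma sum_baseCubes (f : ElemCube d → ℝ) :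
    ∑ Q ∈ baseCubes d k n, f Q =
      ∑ b ∈ cubeTypes d k, ∑ x ∈ latticeBox (Fin d) n, f (cubeAt x b) := by
  rw [baseCubes, Finset.sum_map, Finset.sum_product_right]
  rfl

lemma card_baseCubes :
    (baseCubes d k n).card = (latticeBox (Fin d) n).card * (cubeTypes d k).card := by
  rw [baseCubes, Finset.card_map, Finset.card_product]

lemma cast_basePoint_mem_cubeSet (Q : ElemCube d) : (fun i => (basePoint Q i : ℝ)) ∈ cubeSet Q :=
  fun i => ⟨le_rfl, le_add_of_nonneg_right (by split_ifs <;> norm_num)⟩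

lemma basePoint_mem_latticeBox_of_cubeSet_subset {Q : ElemCube d} (hQ : cubeSet Q ⊆ lambda d n) :
    basePoint Q ∈ latticeBox (Fin d) (n + 1) := by
  refine mem_latticeBox.2 fun i => ?_
  obtain ⟨hlow, hupp⟩ := hQ (cast_basePoint_mem_cubeSet Q) i
  beta_reduce at hlow hupp
  have hlow : -(n : ℤ) ≤ basePoint Q i := by exact_mod_cast hlow
  have hupp : basePoint Q i ≤ n := by exact_mod_cast hupp
  push_cast
  omega

lemma cubeSet_subset_lambda {Q : ElemCube d} (hQ : basePoint Q ∈ latticeBox (Fin d) n) :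
    cubeSet Q ⊆ lambda d n := by
  intro x hx i
  obtain ⟨hlow, hupp⟩ := mem_latticeBox.1 hQ i
  have hlow : -(n : ℝ) ≤ (Q i).1 := by exact_mod_cast hlow
  have hupp : ((Q i).1 : ℝ) + 1 ≤ n := by exact_mod_cast hupp
  have hlen : (if (Q i).2 then 1 else 0 : ℝ) ≤ 1 := by split_ifs <;> norm_num
  exact ⟨hlow.trans (hx i).1, (hx i).2.trans (by linarith)⟩

open Classical in
lemma mem_boxCubes {Q : ElemCube d} :
    Q ∈ boxCubes d k n ↔ cubeDim Q = k ∧ cubeSet Q ⊆ lambda d n := by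
  rw [boxCubes, Finset.mem_filter, mem_baseCubes]
  exact ⟨fun h => ⟨h.1.1, h.2⟩,
    fun h => ⟨⟨h.1, basePoint_mem_latticeBox_of_cubeSet_subset h.2⟩, h.2⟩⟩

lemma baseCubes_subset_boxCubes : baseCubes d k n ⊆ boxCubes d k n := fun _ hQ =>
  mem_boxCubes.2 ((mem_baseCubes.1 hQ).imp_right cubeSet_subset_lambda)

open Classical in
lemma boxCubes_subset_baseCubes : boxCubes d k n ⊆ baseCubes d k (n + 1) :=
  Finset.filter_subset _ _

end Box

/-! ### Densities -/

section Density

variable {d k : ℕ} {u v w : ℕ → ℝ} {a b : ℝ}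

/-- `u n / |Λ_n| → a`: the quantity `u`, observed in the boxes `Λ_n`, has density `a`. -/
def HasDensity (d : ℕ) (u : ℕ → ℝ) (a : ℝ) : Prop :=
  Tendsto (fun n : ℕ => ((2 * (n : ℝ)) ^ d)⁻¹ * u n) atTop (𝓝 a)

lemma HasDensity.add (hu : HasDensity d u a) (hv : HasDensity d v b) :
    HasDensity d (fun n => u n + v n) (a + b) := by
  simpa only [HasDensity, mul_add] using Tendsto.add hu hv

lemma HasDensity.sub (hu : HasDensity d u a) (hv : HasDensity d v b) :
    HasDensity d (fun n => u n - v n) (a - b) := by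
  simpa only [HasDensity, mul_sub] using Tendsto.sub hu hv

lemma HasDensity.mul_const (hu : HasDensity d u a) (c : ℝ) :
    HasDensity d (fun n => u n * c) (a * c) := by
  simpa only [HasDensity, mul_assoc] using Tendsto.mul_const c hu

lemma hasDensity_sum {ι : Type*} {s : Finset ι} {u : ι → ℕ → ℝ} {a : ι → ℝ}
    (hu : ∀ i ∈ s, HasDensity d (u i) (a i)) :
    HasDensity d (fun n => ∑ i ∈ s, u i n) (∑ i ∈ s, a i) := by
  simpa only [HasDensity, Finset.mul_sum] using tendsto_finsetSum s hu

lemma HasDensity.squeeze (hu : HasDensity d u a) (hw : HasDensity d w a) (huv : u ≤ v)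
    (hvw : v ≤ w) : HasDensity d v a :=
  tendsto_of_tendsto_of_tendsto_of_le_of_le hu hw
    (fun n => mul_le_mul_of_nonneg_left (huv n) (by positivity))
    fun n => mul_le_mul_of_nonneg_left (hvw n) (by positivity)

lemma HasDensity.squeeze_of_tendsto {w : ℕ → ℕ → ℝ} {b : ℕ → ℝ} (hu : HasDensity d u a)
    (hw : ∀ m, HasDensity d (w m) (b m)) (hb : Tendsto b atTop (𝓝 a)) (huv : u ≤ v)
    (hvw : ∀ m, v ≤ w m) : HasDensity d v a := by
  refine tendsto_order.2 ⟨fun c hc => ?_, fun c hc => ?_⟩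
  · filter_upwards [hu.eventually_const_lt hc] with n hn
    exact hn.trans_le (mul_le_mul_of_nonneg_left (huv n) (by positivity))
  · obtain ⟨m, hm⟩ := (hb.eventually_lt_const hc).exists
    filter_upwards [(hw m).eventually_lt_const hm] with n hn
    exact (mul_le_mul_of_nonneg_left (hvw m n) (by positivity)).trans_lt hn

lemma cast_card_latticeBox (d n : ℕ) : ((latticeBox (Fin d) n).card : ℝ) = (2 * (n : ℝ)) ^ d := by
  rw [card_latticeBox, Fintype.card_fin]
  push_cast
  rfl

lemma hasDensity_card_latticeBox_add (d m : ℕ) :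
    HasDensity d (fun n => ((latticeBox (Fin d) (n + m)).card : ℝ)) 1 :=
  (tendsto_card_latticeBox_add_div m).congr fun n => by
    rw [← cast_card_latticeBox, div_eq_inv_mul]

lemma hasDensity_card_latticeBox_sub (d m : ℕ) :
    HasDensity d (fun n => ((latticeBox (Fin d) (n - m)).card : ℝ)) 1 := by
  refine (tendsto_add_atTop_iff_nat m).1 ?_
  refine (inv_one (G := ℝ) ▸
    (tendsto_card_latticeBox_add_div (ι := Fin d) m).inv₀ one_ne_zero).congr fun n => ?_
  beta_reduce
  rw [Nat.add_sub_cancel, inv_div, ← cast_card_latticeBox, div_eq_inv_mul]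

lemma hasDensity_card_baseCubes_of_latticeBox {r : ℕ → ℕ}
    (hr : HasDensity d (fun n => ((latticeBox (Fin d) (r n)).card : ℝ)) 1) :
    HasDensity d (fun n => ((baseCubes d k (r n)).card : ℝ)) (cubeTypes d k).card := by
  simpa only [card_baseCubes, Nat.cast_mul, one_mul] using hr.mul_const (cubeTypes d k).card

lemma hasDensity_card_boxCubes :
    HasDensity d (fun n => ((boxCubes d k n).card : ℝ)) (cubeTypes d k).card :=
  (hasDensity_card_baseCubes_of_latticeBox (hasDensity_card_latticeBox_add d 0)).squeeze
    (hasDensity_card_baseCubes_of_latticeBox (hasDensity_card_latticeBox_add d 1))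
    (fun _ => Nat.cast_le.2 (Finset.card_le_card baseCubes_subset_boxCubes))
    fun _ => Nat.cast_le.2 (Finset.card_le_card boxCubes_subset_baseCubes)

lemma hasDensity_card_boxCubes_sub_card_baseCubes (m : ℕ) :
    HasDensity d (fun n => ((boxCubes d k n).card : ℝ) - (baseCubes d k (n - m)).card) 0 := by
  simpa only [sub_self] using (hasDensity_card_boxCubes (k := k)).sub
    (hasDensity_card_baseCubes_of_latticeBox (k := k) (hasDensity_card_latticeBox_sub d m))

end Density

section ErgodicCount

variable {d : ℕ} {p : ElemCube d → Config d → Prop}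

/-- The expected number per unit volume of `k`-dimensional cubes which satisfy the covariant
property `p`. -/
def cubeIntensity (P : Measure (Config d)) (p : ElemCube d → Config d → Prop) (k : ℕ) : ℝ :=
  ∑ b ∈ cubeTypes d k, P.real {ω | p (cubeAt 0 b) ω}

open Classical in
lemma card_filter_baseCubes (hp : IsCovariant p) (k n : ℕ) (ω : Config d) :
    (((baseCubes d k n).filter (p · ω)).card : ℝ) =
      ∑ b ∈ cubeTypes d k, ∑ x ∈ latticeBox (Fin d) n,
        {ω | p (cubeAt 0 b) ω}.indicator (1 : Config d → ℝ) (x +ᵥ ω) := by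
  rw [Finset.card_filter, Nat.cast_sum, sum_baseCubes]
  refine Finset.sum_congr rfl fun b _ => Finset.sum_congr rfl fun x _ => ?_
  have hbase : translateCube (-x) (cubeAt x b) = cubeAt 0 b :=
    funext fun i => Prod.ext (add_neg_cancel (x i)) rfl
  have hcov : p (cubeAt 0 b) (x +ᵥ ω) = p (cubeAt x b) ω := by rw [← hbase]; exact hp (-x) _ ω
  simp [Set.indicator_apply, hcov]

lemma card_filter_boxCubes_le {k m n : ℕ} (hmn : m ≤ n) (r : ElemCube d → Prop)
    [DecidablePred r] :
    (((boxCubes d k n).filter r).card : ℝ) ≤ ((baseCubes d k m).filter r).card +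
      ((boxCubes d k n).card - (baseCubes d k m).card) := by
  classical
  have hsub : baseCubes d k m ⊆ boxCubes d k n :=
    (baseCubes_mono hmn).trans baseCubes_subset_boxCubes
  rw [← Nat.cast_sub (Finset.card_le_card hsub), ← Finset.card_sdiff_of_subset hsub]
  norm_cast
  refine (Finset.card_le_card fun Q hQ => ?_).trans (Finset.card_union_le _ _)
  rw [Finset.mem_filter] at hQ
  rw [Finset.mem_union, Finset.mem_filter, Finset.mem_sdiff]
  tauto

open Classical in
theorem ae_hasDensity_card_filter_boxCubes {P : Measure (Config d)} [IsProbabilityMeasure P]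
    [ErgodicVAdd (Fin d → ℤ) (Config d) P] (hp : IsCovariant p)
    (hmeas : ∀ Q, Measurable (p Q)) (k : ℕ) :
    ∀ᵐ ω ∂P, HasDensity d (fun n => (((boxCubes d k n).filter (p · ω)).card : ℝ))
      (cubeIntensity P p k) := by
  have hset (b : Fin d → Bool) : MeasurableSet {ω | p (cubeAt 0 b) ω} :=
    measurableSet_setOfPred.2 (hmeas _)
  have hergodic (b : Fin d → Bool) := ae_tendsto_orbitAverage_latticeBox (ι := Fin d) (μ := P)
    (f := {ω | p (cubeAt 0 b) ω}.indicator 1) (C := 1)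
    (measurable_one.indicator (hset b)) fun ω => by
      rw [Set.indicator_apply]
      split_ifs <;> simp
  filter_upwards [ae_all_iff.2 hergodic] with ω hω
  have hbase : HasDensity d (fun n => (((baseCubes d k n).filter (p · ω)).card : ℝ))
      (cubeIntensity P p k) := by
    simp only [card_filter_baseCubes hp]
    refine hasDensity_sum fun b _ => ?_
    simpa only [HasDensity, orbitAverage_eq_inv_card_mul, cast_card_latticeBox,
      integral_indicator_one (hset b)] using hω b
  have hshell := hbase.add (hasDensity_card_boxCubes_sub_card_baseCubes (d := d) (k := k) 0)
  rw [add_zero] at hshell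
  exact hbase.squeeze hshell
    (fun n => Nat.cast_le.2 (Finset.card_le_card
      (Finset.filter_subset_filter _ baseCubes_subset_boxCubes)))
    fun n => card_filter_boxCubes_le (Nat.sub_le n 0) _

end ErgodicCount

/-! ### Present cubes -/

section Present

variable {d k n q : ℕ} {s t : ℝ}

/-- The barycenter of an elementary cube. It lies in the relative interior, hence in another
elementary cube only if the whole cube does. -/
def barycenter (Q : ElemCube d) : Fin d → ℝ := fun i => (Q i).1 + if (Q i).2 then 1 / 2 else 0

lemma barycenter_mem_cubeSet (Q : ElemCube d) : barycenter Q ∈ cubeSet Q := by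
  intro i
  simp only [barycenter, Set.mem_Icc, le_add_iff_nonneg_right, add_le_add_iff_left]
  split_ifs <;> norm_num

lemma isFace_of_barycenter_mem_cubeSet {Q Q' : ElemCube d} (h : barycenter Q ∈ cubeSet Q') :
    IsFace Q Q' := by
  intro i
  obtain ⟨hlow, hupp⟩ := h i
  have hlow : 2 * (Q' i).1 ≤ 2 * (Q i).1 + if (Q i).2 then 1 else 0 := by
    rify
    simp only [barycenter] at hlow
    split_ifs at hlow ⊢ <;> push_cast <;> linarith
  have hupp : 2 * (Q i).1 + (if (Q i).2 then 1 else 0) ≤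
      2 * (Q' i).1 + if (Q' i).2 then 2 else 0 := by
    rify
    simp only [barycenter] at hupp
    split_ifs at hupp ⊢ <;> push_cast <;> linarith
  split_ifs at hlow hupp ⊢ <;> omega

lemma IsFace.translateCube {Q Q' : ElemCube d} (h : IsFace Q Q') (x : Fin d → ℤ) :
    IsFace (translateCube x Q) (translateCube x Q') := by
  refine fun i => ⟨add_le_add_left (h i).1 (x i), ?_⟩
  simp only [_root_.translateCube, add_right_comm _ (x i)]
  exact add_le_add_left (h i).2 (x i)

/-- The cube `Q` is contained in `X(t)`. -/
def IsPresent (t : ℝ) (Q : ElemCube d) (ω : Config d) : Prop := cubeSet Q ⊆ cubSet ω t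

lemma isPresent_iff {Q : ElemCube d} {ω : Config d} :
    IsPresent t Q ω ↔ ∃ Q', IsFace Q Q' ∧ (ω Q' : ℝ) ≤ t := by
  refine ⟨fun h => ?_, fun ⟨Q', hface, hQ'⟩ =>
    hface.cubeSet_subset.trans (Set.subset_biUnion_of_mem (u := cubeSet) hQ')⟩
  obtain ⟨Q', hQ', hmem⟩ := Set.mem_iUnion₂.1 (h (barycenter_mem_cubeSet Q))
  exact ⟨Q', isFace_of_barycenter_mem_cubeSet hmem, hQ'⟩

lemma IsPresent.mono {Q : ElemCube d} {ω : Config d} (h : IsPresent s Q ω) (hst : s ≤ t) :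
    IsPresent t Q ω :=
  isPresent_iff.2 ((isPresent_iff.1 h).imp fun _ => And.imp_right (·.trans hst))

lemma isCovariant_isPresent (t : ℝ) : IsCovariant (IsPresent (d := d) t) := by
  refine isCovariant_of_imp fun x Q ω h => ?_
  obtain ⟨Q', hface, hQ'⟩ := isPresent_iff.1 h
  exact isPresent_iff.2 ⟨translateCube x Q', hface.translateCube x,
    (configShift_apply_translateCube x ω Q').symm ▸ hQ'⟩

lemma measurable_isPresent (t : ℝ) (Q : ElemCube d) : Measurable (IsPresent t Q) := by
  simp only [funext fun ω => propext (isPresent_iff (t := t) (Q := Q) (ω := ω))]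
  exact .exists fun Q' => measurable_const.and <| measurableSet_setOfPred.1 <|
    measurableSet_le (measurable_pi_apply Q').subtype_val measurable_const

open Classical in
/-- The `k`-dimensional cubes of `X^n(t)`. -/
def presentCubes (t : ℝ) (k n : ℕ) (ω : Config d) : Finset (ElemCube d) :=
  (boxCubes d k n).filter (IsPresent t · ω)

lemma presentCubes_mono (hst : s ≤ t) (k n : ℕ) (ω : Config d) :
    presentCubes s k n ω ⊆ presentCubes t k n ω := by
  classical exact Finset.monotone_filter_right _ fun _ _ h => h.mono hst

lemma cubesIn_cubSet_inter_lambda (ω : Config d) (t : ℝ) :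
    cubesIn d k (cubSet ω t ∩ lambda d n) = presentCubes t k n ω := by
  ext Q
  rw [presentCubes, Finset.coe_filter, Set.mem_ofPred_eq, mem_boxCubes, cubesIn,
    Set.mem_ofPred_eq, Set.subset_inter_iff, IsPresent]
  tauto

lemma bettiN_add_boundaryRank_add_boundaryRank (t : ℝ) (ω : Config d) :
    bettiN d q n t ω + boundaryRank (presentCubes t q n ω : Set (ElemCube d)) +
      boundaryRank (presentCubes t (q + 1) n ω : Set (ElemCube d)) =
      (presentCubes t q n ω).card := by
  have hfin : (cubesIn d q (cubSet ω t ∩ lambda d n)).Finite :=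
    cubesIn_cubSet_inter_lambda ω t ▸ Finset.finite_toSet _
  simpa only [bettiN, cubesIn_cubSet_inter_lambda, Set.ncard_coe_finset] using
    betti_add_boundaryRank_add_boundaryRank hfin

end Present

/-! ### The boundary rank as a count of essential cubes -/

section Essential

variable {d k n : ℕ} {t : ℝ} {W W' : Set (Fin d → ℤ)} {Q : ElemCube d} {ω : Config d}

/-- The present cubes of the same dimension which precede `Q` in the order of `cubeKey` and whose
base point has an offset from that of `Q` in the window `W`. -/
def earlierCubes (t : ℝ) (W : Set (Fin d → ℤ)) (Q : ElemCube d) (ω : Config d) :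
    Set (ElemCube d) :=
  {Q' | cubeDim Q' = cubeDim Q ∧ cubeKey Q' < cubeKey Q ∧ basePoint Q' - basePoint Q ∈ W ∧
    IsPresent t Q' ω}

/-- The boundary of `Q` depends rationally on the boundaries of the earlier cubes in the window
`W`. -/
def IsRedundant (t : ℝ) (W : Set (Fin d → ℤ)) (Q : ElemCube d) (ω : Config d) : Prop :=
  IsTorsionMod (boundaryCube d Q)
    (Submodule.span ℤ (boundaryCube d '' earlierCubes t W Q ω))

/-- The cube `Q` is present and its boundary is rationally independent of the boundaries of the
earlier cubes in the window `W`. -/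
def IsEssential (t : ℝ) (W : Set (Fin d → ℤ)) (Q : ElemCube d) (ω : Config d) : Prop :=
  IsPresent t Q ω ∧ ¬ IsRedundant t W Q ω

lemma earlierCubes_mono (hW : W ⊆ W') : earlierCubes t W Q ω ⊆ earlierCubes t W' Q ω :=
  fun _ h => ⟨h.1, h.2.1, hW h.2.2.1, h.2.2.2⟩

lemma IsRedundant.mono (h : IsRedundant t W Q ω) (hW : W ⊆ W') : IsRedundant t W' Q ω :=
  IsTorsionMod.mono h (Submodule.span_mono (Set.image_mono (earlierCubes_mono hW)))

lemma basePoint_translateCube (x : Fin d → ℤ) (Q : ElemCube d) :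
    basePoint (translateCube x Q) = basePoint Q + x := rfl

lemma image_translateCube_earlierCubes_subset (x : Fin d → ℤ) :
    translateCube x '' earlierCubes t W Q ω ⊆
      earlierCubes t W (translateCube x Q) (configShift x ω) := by
  rintro _ ⟨Q', ⟨hdim, hkey, hW, hpres⟩, rfl⟩
  refine ⟨hdim, (cubeKey_translateCube_lt_iff x Q' Q).2 hkey, ?_, ?_⟩
  · rwa [basePoint_translateCube, basePoint_translateCube, add_sub_add_right_eq_sub]
  · rwa [isCovariant_isPresent]

lemma isCovariant_isRedundant (t : ℝ) (W : Set (Fin d → ℤ)) : IsCovariant (IsRedundant t W) :=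
  isCovariant_of_imp fun x _ _ h => (IsTorsionMod.translateCube h x).mono
    (Submodule.span_mono (Set.image_mono (image_translateCube_earlierCubes_subset x)))

lemma isCovariant_isEssential (t : ℝ) (W : Set (Fin d → ℤ)) : IsCovariant (IsEssential t W) :=
  fun x Q ω => by
    rw [IsEssential, isCovariant_isPresent t x Q ω, isCovariant_isRedundant t W x Q ω]; rfl

lemma measurable_isRedundant (t : ℝ) (W : Set (Fin d → ℤ)) (Q : ElemCube d) :
    Measurable (IsRedundant t W Q) := by
  unfold IsRedundant
  simp only [funext fun ω => propext (isTorsionMod_span_image_iff_exists_finset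
    (f := boundaryCube d) (S := earlierCubes t W Q ω) (v := boundaryCube d Q))]
  exact .exists fun F => .and (.forall fun Q' => measurable_const.imp <| measurable_const.and <|
    measurable_const.and <| measurable_const.and <| measurable_isPresent t Q') measurable_const

lemma measurable_isEssential (t : ℝ) (W : Set (Fin d → ℤ)) (Q : ElemCube d) :
    Measurable (IsEssential t W Q) :=
  (measurable_isPresent t Q).and (measurable_isRedundant t W Q).not

lemma iUnion_coe_latticeBox (ι : Type*) [Fintype ι] [DecidableEq ι] :
    ⋃ m : ℕ, (latticeBox ι m : Set (ι → ℤ)) = Set.univ := by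
  refine Set.eq_univ_of_forall fun x => Set.mem_iUnion.2 ⟨∑ i, (x i).natAbs + 1, ?_⟩
  refine Finset.mem_coe.2 (mem_latticeBox.2 fun i => ?_)
  have := Finset.single_le_sum (f := fun i => (x i).natAbs) (fun _ _ => Nat.zero_le _)
    (Finset.mem_univ i)
  omega

/-- A rational dependency only involves finitely many cubes, so a large window sees all of them. -/
lemma isRedundant_univ_iff :
    IsRedundant t Set.univ Q ω ↔ ∃ m : ℕ, IsRedundant t (latticeBox (Fin d) m) Q ω := by
  refine ⟨fun h => ?_, fun ⟨m, h⟩ => h.mono (Set.subset_univ _)⟩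
  obtain ⟨F, hF, hQF⟩ := isTorsionMod_span_image_iff_exists_finset.1 h
  have hmono : Monotone fun m => earlierCubes t (latticeBox (Fin d) m) Q ω := fun _ _ hmm' =>
    earlierCubes_mono (Finset.coe_subset.2 (latticeBox_mono hmm'))
  have hunion : (F : Set (ElemCube d)) ⊆ ⋃ m, earlierCubes t (latticeBox (Fin d) m) Q ω := by
    intro Q' hQ'
    obtain ⟨hdim, hkey, -, hpres⟩ := hF hQ'
    obtain ⟨m, hm⟩ := Set.mem_iUnion.1
      (iUnion_coe_latticeBox (Fin d) ▸ Set.mem_univ (basePoint Q' - basePoint Q))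
    exact Set.mem_iUnion.2 ⟨m, hdim, hkey, hm, hpres⟩
  obtain ⟨m, hm⟩ := hmono.directed_le.exists_mem_subset_of_finset_subset_biUnion hunion
  exact ⟨m, isTorsionMod_span_image_iff_exists_finset.2 ⟨F, hm, hQF⟩⟩

lemma tendsto_cubeIntensity_isEssential (P : Measure (Config d)) [IsFiniteMeasure P] (t : ℝ)
    (k : ℕ) :
    Tendsto (fun m => cubeIntensity P (IsEssential t (latticeBox (Fin d) m)) k) atTop
      (𝓝 (cubeIntensity P (IsEssential t Set.univ) k)) := by
  refine tendsto_finsetSum _ fun b _ => (ENNReal.tendsto_toReal (measure_ne_top P _)).comp ?_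
  have hinter : {ω | IsEssential t Set.univ (cubeAt 0 b) ω} =
      ⋂ m : ℕ, {ω | IsEssential t (latticeBox (Fin d) m) (cubeAt 0 b) ω} := by
    ext ω
    simp only [IsEssential, isRedundant_univ_iff, not_exists, Set.mem_iInter, Set.mem_ofPred_eq,
      forall_and, forall_const]
  rw [hinter]
  exact tendsto_measure_iInter_atTop
    (fun m => (measurableSet_setOfPred.2 (measurable_isEssential t _ _)).nullMeasurableSet)
    (fun _ _ hmm' ω h => h.imp_right
      (mt fun hred => hred.mono (Finset.coe_subset.2 (latticeBox_mono hmm'))))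
    ⟨0, measure_ne_top P _⟩

open Classical in
lemma boundaryRank_coe_eq_card_filter (S : Finset (ElemCube d)) :
    boundaryRank (S : Set (ElemCube d)) = (S.filter fun Q =>
      ¬ IsTorsionMod (boundaryCube d Q) (Submodule.span ℤ
        (boundaryCube d '' {Q' | Q' ∈ S ∧ cubeKey Q' < cubeKey Q}))).card :=
  finrank_image_eq_card_filter cubeKey_injective S

open Classical in
lemma card_filter_isEssential_univ_le_boundaryRank (t : ℝ) (k n : ℕ) (ω : Config d) :
    ((boxCubes d k n).filter (IsEssential t Set.univ · ω)).card ≤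
      boundaryRank (presentCubes t k n ω : Set (ElemCube d)) := by
  rw [boundaryRank_coe_eq_card_filter]
  refine Finset.card_le_card fun Q hQ => ?_
  obtain ⟨hbox, hpres, hess⟩ := Finset.mem_filter.1 hQ
  refine Finset.mem_filter.2 ⟨Finset.mem_filter.2 ⟨hbox, hpres⟩, mt (fun hred => ?_) hess⟩
  refine hred.mono (Submodule.span_mono (Set.image_mono fun Q' ⟨hQ', hkey⟩ => ?_))
  obtain ⟨hbox', hpres'⟩ := Finset.mem_filter.1 hQ'
  exact ⟨(mem_boxCubes.1 hbox').1.trans (mem_boxCubes.1 hbox).1.symm, hkey, Set.mem_univ _, hpres'⟩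

lemma earlierCubes_subset_presentCubes {m : ℕ} (hQ : Q ∈ baseCubes d k (n - m)) :
    earlierCubes t (latticeBox (Fin d) m) Q ω ⊆ presentCubes t k n ω := by
  classical
  rintro Q' ⟨hdim, -, hoffset, hpres⟩
  obtain ⟨hdimQ, hbase⟩ := mem_baseCubes.1 hQ
  refine Finset.mem_filter.2 ⟨baseCubes_subset_boxCubes <| mem_baseCubes.2
    ⟨hdim.trans hdimQ, mem_latticeBox.2 fun i => ?_⟩, hpres⟩
  have hQi := mem_latticeBox.1 hbase i
  have hoffseti := mem_latticeBox.1 (Finset.mem_coe.1 hoffset) i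
  rw [Pi.sub_apply] at hoffseti
  omega

open Classical in
lemma boundaryRank_le_card_filter_isEssential (t : ℝ) (k m n : ℕ) (ω : Config d) :
    (boundaryRank (presentCubes t k n ω : Set (ElemCube d)) : ℝ) ≤
      ((boxCubes d k n).filter (IsEssential t (latticeBox (Fin d) m) · ω)).card +
        ((boxCubes d k n).card - (baseCubes d k (n - m)).card) := by
  rw [boundaryRank_coe_eq_card_filter, presentCubes, Finset.filter_filter]
  refine (card_filter_boxCubes_le (Nat.sub_le n m) _).trans (add_le_add_left (Nat.cast_le.2 ?_) _)
  refine Finset.card_le_card fun Q hQ => ?_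
  obtain ⟨hbase, hpres, hess⟩ := Finset.mem_filter.1 hQ
  refine Finset.mem_filter.2 ⟨baseCubes_subset_boxCubes (baseCubes_mono (Nat.sub_le n m) hbase),
    hpres, mt (fun hred => ?_) hess⟩
  exact IsTorsionMod.mono hred (Submodule.span_mono (Set.image_mono fun Q' hQ' =>
    ⟨earlierCubes_subset_presentCubes hbase hQ', hQ'.2.1⟩))

theorem ae_hasDensity_boundaryRank {P : Measure (Config d)} [IsProbabilityMeasure P]
    [ErgodicVAdd (Fin d → ℤ) (Config d) P] (t : ℝ) (k : ℕ) :
    ∀ᵐ ω ∂P, HasDensity d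
      (fun n => (boundaryRank (presentCubes t k n ω : Set (ElemCube d)) : ℝ))
      (cubeIntensity P (IsEssential t Set.univ) k) := by
  have hcount (W : Set (Fin d → ℤ)) := ae_hasDensity_card_filter_boxCubes (P := P)
    (isCovariant_isEssential t W) (measurable_isEssential t W) k
  filter_upwards [hcount Set.univ, ae_all_iff.2 fun m : ℕ => hcount (latticeBox (Fin d) m)]
    with ω hlow hupp
  exact hlow.squeeze_of_tendsto
    (fun m => (hupp m).add (hasDensity_card_boxCubes_sub_card_baseCubes m))
    (by simpa only [add_zero] using tendsto_cubeIntensity_isEssential P t k)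
    (fun n => Nat.cast_le.2 (card_filter_isEssential_univ_le_boundaryRank t k n ω))
    fun m n => boundaryRank_le_card_filter_isEssential t k m n ω

end Essential

/-! ### Uniform convergence from dominated increments -/

section Increments

variable {T : Type*}

/-- The increments of `f` are bounded by those of `D`, which is in particular monotone. -/
def IncrementsDominated [Preorder T] (f D : T → ℝ) : Prop :=
  ∀ ⦃s t⦄, s ≤ t → |f t - f s| ≤ D t - D s

namespace IncrementsDominated

lemma monotone [Preorder T] {f D : T → ℝ} (h : IncrementsDominated f D) : Monotone D :=
  fun _ _ hst => sub_nonneg.1 ((abs_nonneg _).trans (h hst))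

lemma sum [Preorder T] {ι : Type*} {I : Finset ι} {f D : ι → T → ℝ}
    (h : ∀ i ∈ I, IncrementsDominated (f i) (D i)) :
    IncrementsDominated (fun t => ∑ i ∈ I, f i t) fun t => ∑ i ∈ I, D i t := by
  intro s t hst
  rw [← Finset.sum_sub_distrib, ← Finset.sum_sub_distrib]
  exact (Finset.abs_sum_le_sum_abs _ _).trans (Finset.sum_le_sum fun i hi => h i hi hst)

lemma const_mul [Preorder T] {f D : T → ℝ} (h : IncrementsDominated f D) {c : ℝ} (hc : 0 ≤ c) :
    IncrementsDominated (fun t => c * f t) fun t => c * D t := by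
  intro s t hst
  rw [← mul_sub, ← mul_sub, abs_mul, abs_of_nonneg hc]
  exact mul_le_mul_of_nonneg_left (h hst) hc

lemma domRestrict [Preorder T] {f D : T → ℝ} (h : IncrementsDominated f D) (I : Set T) :
    IncrementsDominated (fun t : I => f t) fun t : I => D t :=
  fun _ _ hst => h hst

variable [LinearOrder T] {f D : T → ℝ}

lemma abs_sub_le_abs_sub (h : IncrementsDominated f D) (s t : T) :
    |f t - f s| ≤ |D t - D s| := by
  rcases le_total s t with hst | hts
  · exact (h hst).trans (le_abs_self _)
  · rw [abs_sub_comm, abs_sub_comm (D t)]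
    exact (h hts).trans (le_abs_self _)

lemma continuous [TopologicalSpace T] (h : IncrementsDominated f D) (hD : Continuous D) :
    Continuous f :=
  continuous_iff_continuousAt.2 fun s => tendsto_iff_dist_tendsto_zero.2 <|
    squeeze_zero (fun _ => dist_nonneg) (fun t => h.abs_sub_le_abs_sub s t)
      (tendsto_iff_dist_tendsto_zero.1 (hD.tendsto s))

lemma abs_sub_le_of_mem_Icc {f₁ D₁ f₂ D₂ : T → ℝ} (h₁ : IncrementsDominated f₁ D₁)
    (h₂ : IncrementsDominated f₂ D₂) {u v t : T} (ht : t ∈ Set.Icc u v) :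
    |f₁ t - f₂ t| ≤ |f₁ u - f₂ u| + (D₁ v - D₁ u) + (D₂ v - D₂ u) := by
  have hinc₁ := (h₁ ht.1).trans (sub_le_sub_right (h₁.monotone ht.2) _)
  have hinc₂ := (h₂ ht.1).trans (sub_le_sub_right (h₂.monotone ht.2) _)
  calc |f₁ t - f₂ t| = |(f₁ u - f₂ u) + (f₁ t - f₁ u) - (f₂ t - f₂ u)| := by ring_nf
    _ ≤ |f₁ u - f₂ u| + |f₁ t - f₁ u| + |f₂ t - f₂ u| :=
      (abs_sub _ _).trans (add_le_add_left (abs_add_le _ _) _)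
    _ ≤ _ := by linarith

end IncrementsDominated

variable [LinearOrder T] [TopologicalSpace T] [OrderTopology T] [DenselyOrdered T] {S : Set T}

lemma exists_mem_dense_Ici_mem_nhds (hS : Dense S) (hbot : ∀ x, IsBot x → x ∈ S) {t : T}
    {U : Set T} (hU : U ∈ 𝓝 t) : ∃ u ∈ S ∩ U, Set.Ici u ∈ 𝓝 t := by
  by_cases ht : IsBot t
  · exact ⟨t, ⟨hbot t ht, mem_of_mem_nhds hU⟩, univ_mem' ht⟩
  · obtain ⟨l, hlt, hl⟩ := exists_Ioc_subset_of_mem_nhds hU (by simpa [IsBot] using ht)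
    obtain ⟨u, hu, hlu, hut⟩ := hS.exists_between hlt
    exact ⟨u, ⟨hu, hl ⟨hlu, hut.le⟩⟩, Ici_mem_nhds hut⟩

lemma exists_Icc_mem_nhds_of_dense (hS : Dense S) (hbot : ∀ x, IsBot x → x ∈ S)
    (htop : ∀ x, IsTop x → x ∈ S) {t : T} {U : Set T} (hU : U ∈ 𝓝 t) :
    ∃ u ∈ S ∩ U, ∃ v ∈ S ∩ U, Set.Icc u v ∈ 𝓝 t := by
  obtain ⟨u, huSU, hu⟩ := exists_mem_dense_Ici_mem_nhds hS hbot hU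
  obtain ⟨v, hvSU, hv⟩ := exists_mem_dense_Ici_mem_nhds (T := Tᵒᵈ) hS.orderDual
    htop (t := OrderDual.toDual t) hU
  exact ⟨u, huSU, v, hvSU, inter_mem hu hv⟩

/-- As in Pólya's theorem on distribution functions, convergence on a dense set is uniform since
the oscillation between two nearby points of the dense set is controlled by `D n` at these points
alone. -/
theorem tendstoUniformly_of_incrementsDominated [CompactSpace T] {f D : ℕ → T → ℝ} {g A : T → ℝ}
    (hS : Dense S) (hbot : ∀ x, IsBot x → x ∈ S) (htop : ∀ x, IsTop x → x ∈ S)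
    (hf : ∀ n, IncrementsDominated (f n) (D n)) (hg : IncrementsDominated g A)
    (hA : Continuous A) (hfg : ∀ t ∈ S, Tendsto (f · t) atTop (𝓝 (g t)))
    (hDA : ∀ t ∈ S, Tendsto (D · t) atTop (𝓝 (A t))) : TendstoUniformly f g atTop := by
  rw [← tendstoLocallyUniformly_iff_tendstoUniformly_of_compactSpace,
    Metric.tendstoLocallyUniformly_iff]
  intro ε hε t
  obtain ⟨u, ⟨huS, hu⟩, v, ⟨hvS, hv⟩, huv⟩ := exists_Icc_mem_nhds_of_dense hS hbot htop
    (hA.continuousAt.preimage_mem_nhds (Metric.ball_mem_nhds (A t) (by positivity : 0 < ε / 4)))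
  have hAuv : A v - A u < ε / 2 := by
    rw [Set.mem_preimage, Real.ball_eq_Ioo] at hu hv
    linarith [hu.1, hv.2]
  have hlim : Tendsto (fun n => |f n u - g u| + (D n v - D n u) + (A v - A u)) atTop
      (𝓝 (|g u - g u| + (A v - A u) + (A v - A u))) :=
    (((hfg u huS).sub_const _).abs.add ((hDA v hvS).sub (hDA u huS))).add_const _
  refine ⟨_, huv, ?_⟩
  filter_upwards [hlim.eventually_lt_const (u := ε) (by rw [sub_self, abs_zero]; linarith)]
    with n hn s hs
  rw [dist_comm]
  exact ((hf n).abs_sub_le_of_mem_Icc hg hs).trans_lt hn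

end Increments

lemma tendsto_iSup_abs_sub {T : Type*} {f : ℕ → T → ℝ} {g : T → ℝ}
    (h : TendstoUniformly f g atTop) : Tendsto (fun n => ⨆ t, |f n t - g t|) atTop (𝓝 0) := by
  refine Metric.tendsto_nhds.2 fun ε hε => ?_
  filter_upwards [Metric.tendstoUniformly_iff.1 h (ε / 2) (half_pos hε)] with n hn
  rw [Real.dist_0_eq_abs, abs_of_nonneg (Real.iSup_nonneg fun t => abs_nonneg _)]
  refine (Real.iSup_le (fun t => ?_) (half_pos hε).le).trans_lt (half_lt_self hε)
  rw [abs_sub_comm]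
  exact (hn t).le

/-! ### The law of large numbers -/

open Classical in
lemma measurable_comp_finset_filter {Ω α β : Type*} [MeasurableSpace Ω] [MeasurableSpace β]
    [Countable α] {p : α → Ω → Prop} (hp : ∀ a, Measurable (p a)) (S : Finset α)
    (g : Finset α → β) : Measurable fun ω => g (S.filter (p · ω)) := by
  let _ : MeasurableSpace (Finset α) := ⊤
  have hfilter : Measurable fun ω => S.filter (p · ω) := measurable_to_countable' fun F => by
    simp only [Set.preimage, Set.mem_singleton_iff, Finset.ext_iff, Finset.mem_filter]
    exact measurableSet_setOfPred.2
      (.forall fun a => (measurable_const.and (hp a)).iff measurable_const)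
  exact (measurable_from_top (f := g)).comp hfilter

section Limit

variable {d q : ℕ}

lemma measurable_comp_presentCubes {β : Type*} [MeasurableSpace β] (t : ℝ) (k n : ℕ)
    (g : Finset (ElemCube d) → β) : Measurable fun ω => g (presentCubes t k n ω) :=
  measurable_comp_finset_filter (measurable_isPresent t) _ g

lemma measurable_bettiN (t : ℝ) (n : ℕ) : Measurable (bettiN d q n t) := by
  have hbetti : bettiN d q n t = fun ω => (presentCubes t q n ω).card -
      boundaryRank (presentCubes t q n ω : Set (ElemCube d)) -
      boundaryRank (presentCubes t (q + 1) n ω : Set (ElemCube d)) := by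
    funext ω
    have := bettiN_add_boundaryRank_add_boundaryRank (q := q) (n := n) t ω
    omega
  rw [hbetti]
  have hcard := measurable_comp_presentCubes (d := d) t q n Finset.card
  have hrank (k : ℕ) :=
    measurable_comp_presentCubes (d := d) t k n fun S => boundaryRank (S : Set (ElemCube d))
  exact (hcard.sub (hrank q)).sub (hrank (q + 1))

lemma bettiN_le_card_boxCubes (t : ℝ) (n : ℕ) (ω : Config d) :
    bettiN d q n t ω ≤ (boxCubes d q n).card := by
  classical
  have := bettiN_add_boundaryRank_add_boundaryRank (q := q) (n := n) t ω
  have : (presentCubes t q n ω).card ≤ (boxCubes d q n).card :=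
    Finset.card_le_card (Finset.filter_subset _ _)
  omega

lemma hasDensity_integral {Ω : Type*} [MeasurableSpace Ω] {μ : Measure Ω} [IsProbabilityMeasure μ]
    {u : ℕ → Ω → ℝ} {w : ℕ → ℝ} {a b : ℝ} (hmeas : ∀ n, Measurable (u n))
    (huw : ∀ n ω, |u n ω| ≤ w n) (hw : HasDensity d w b)
    (hu : ∀ᵐ ω ∂μ, HasDensity d (u · ω) a) : HasDensity d (fun n => ∫ ω, u n ω ∂μ) a := by
  obtain ⟨C, hC⟩ := hw.bddAbove_range
  have hlim := tendsto_integral_of_dominated_convergence (fun _ => C)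
    (fun n => ((hmeas n).const_mul _).aestronglyMeasurable) (integrable_const C)
    (fun n => .of_forall fun ω => ?_) hu
  · simpa only [HasDensity, integral_const_mul, integral_const, probReal_univ, one_smul] using hlim
  · rw [Real.norm_eq_abs, abs_mul, abs_of_nonneg (by positivity)]
    exact (mul_le_mul_of_nonneg_left (huw n ω) (by positivity)).trans (hC ⟨n, rfl⟩)

variable {P : Measure (Config d)} [IsProbabilityMeasure P]
  [ErgodicVAdd (Fin d → ℤ) (Config d) P]

lemma ae_hasDensity_card_presentCubes (t : ℝ) (k : ℕ) :
    ∀ᵐ ω ∂P, HasDensity d (fun n => ((presentCubes t k n ω).card : ℝ))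
      (cubeIntensity P (IsPresent t) k) :=
  ae_hasDensity_card_filter_boxCubes (isCovariant_isPresent t) (measurable_isPresent t) k

lemma ae_hasDensity_card_presentCubes_add (t : ℝ) (k : ℕ) :
    ∀ᵐ ω ∂P, HasDensity d
      (fun n => (presentCubes t k n ω).card + (presentCubes t (k + 1) n ω).card)
      (cubeIntensity P (IsPresent t) k + cubeIntensity P (IsPresent t) (k + 1)) := by
  filter_upwards [ae_hasDensity_card_presentCubes t k,
    ae_hasDensity_card_presentCubes t (k + 1)] with ω hk hk' using hk.add hk'

lemma exists_ae_hasDensity_bettiN (q : ℕ) (t : ℝ) :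
    ∃ a, ∀ᵐ ω ∂P, HasDensity d (fun n => (bettiN d q n t ω : ℝ)) a := by
  refine ⟨cubeIntensity P (IsPresent t) q - cubeIntensity P (IsEssential t Set.univ) q -
    cubeIntensity P (IsEssential t Set.univ) (q + 1), ?_⟩
  filter_upwards [ae_hasDensity_card_presentCubes t q, ae_hasDensity_boundaryRank t q,
    ae_hasDensity_boundaryRank t (q + 1)] with ω hcard hrank hrank'
  refine ((hcard.sub hrank).sub hrank').congr fun n => ?_
  beta_reduce
  rw [← bettiN_add_boundaryRank_add_boundaryRank]
  push_cast
  ring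

theorem ae_hasDensity_bettiN (q : ℕ) (t : ℝ) :
    ∀ᵐ ω ∂P, HasDensity d (fun n => (bettiN d q n t ω : ℝ)) (betaHat d q P t) := by
  obtain ⟨a, ha⟩ := exists_ae_hasDensity_bettiN (P := P) q t
  have hmean : HasDensity d (fun n => ∫ ω, (bettiN d q n t ω : ℝ) ∂P) a :=
    hasDensity_integral (fun n => measurable_from_top.comp (measurable_bettiN t n))
      (fun n ω => (Nat.abs_cast _).trans_le (Nat.cast_le.2 (bettiN_le_card_boxCubes t n ω)))
      hasDensity_card_boxCubes ha
  have hlimsup : betaHat d q P t = a := hmean.limsup_eq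
  rwa [hlimsup]

end Limit

section Uniform

variable {d q : ℕ}

lemma incrementsDominated_bettiN (n : ℕ) (ω : Config d) :
    IncrementsDominated (fun t => (bettiN d q n t ω : ℝ))
      fun t => (presentCubes t q n ω).card + (presentCubes t (q + 1) n ω).card := by
  intro s t hst
  have hrank (k : ℕ) :
      boundaryRank (presentCubes s k n ω : Set (ElemCube d)) ≤
        boundaryRank (presentCubes t k n ω : Set (ElemCube d)) ∧
      boundaryRank (presentCubes t k n ω : Set (ElemCube d)) + (presentCubes s k n ω).card ≤
        boundaryRank (presentCubes s k n ω : Set (ElemCube d)) + (presentCubes t k n ω).card := by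
    have hsub := presentCubes_mono hst k n ω
    have hcard := Finset.card_le_card hsub
    have hle := finrank_image_le_add_card_sub (R := ℤ) (v := boundaryCube d) hsub
    exact ⟨finrank_image_mono hsub, by unfold boundaryRank; omega⟩
  have hs := bettiN_add_boundaryRank_add_boundaryRank (q := q) (n := n) s ω
  have ht := bettiN_add_boundaryRank_add_boundaryRank (q := q) (n := n) t ω
  have hq := hrank q
  have hq' := hrank (q + 1)
  zify at *
  have hbound : |(bettiN d q n t ω : ℤ) - bettiN d q n s ω| ≤
      ((presentCubes t q n ω).card + (presentCubes t (q + 1) n ω).card) -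
      ((presentCubes s q n ω).card + (presentCubes s (q + 1) n ω).card) := by
    rw [abs_le]
    omega
  exact_mod_cast hbound

lemma finite_setOf_isFace (Q : ElemCube d) : {Q' | IsFace Q Q'}.Finite := by
  refine (Set.Finite.pi fun i => (Set.finite_Icc ((Q i).1 - 1) (Q i).1).prod
    (Set.finite_univ (α := Bool))).subset fun Q' hface i _ => ⟨?_, Set.mem_univ _⟩
  obtain ⟨hlow, hupp⟩ := hface i
  rw [Set.mem_Icc]
  split_ifs at hupp <;> omega

/-- A cube that becomes present between times `s` and `t` has a coface with value in `(s, t]`. -/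
lemma incrementsDominated_measureReal_isPresent (P : Measure (Config d)) [IsFiniteMeasure P]
    (Q : ElemCube d) :
    IncrementsDominated (fun t => P.real {ω | IsPresent t Q ω}) fun t =>
      ∑ Q' ∈ (finite_setOf_isFace Q).toFinset, P.real {ω : Config d | (ω Q' : ℝ) ≤ t} := by
  intro s t hst
  have hsub : {ω : Config d | IsPresent s Q ω} ⊆ {ω | IsPresent t Q ω} := fun _ h => h.mono hst
  have hmeas (Q' : ElemCube d) : MeasurableSet {ω : Config d | (ω Q' : ℝ) ≤ s} :=
    measurableSet_le (measurable_pi_apply Q').subtype_val measurable_const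
  have hcover : {ω | IsPresent t Q ω} \ {ω | IsPresent s Q ω} ⊆
      ⋃ Q' ∈ (finite_setOf_isFace Q).toFinset,
        {ω : Config d | (ω Q' : ℝ) ≤ t} \ {ω | (ω Q' : ℝ) ≤ s} := by
    rintro ω ⟨hpres, habs⟩
    obtain ⟨Q', hface, hQ'⟩ := isPresent_iff.1 hpres
    exact Set.mem_biUnion ((finite_setOf_isFace Q).mem_toFinset.2 hface)
      ⟨hQ', fun h => habs (isPresent_iff.2 ⟨Q', hface, h⟩)⟩
  rw [abs_of_nonneg (sub_nonneg.2 (measureReal_mono hsub)),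
    ← measureReal_sdiff hsub (measurableSet_setOfPred.2 (measurable_isPresent s Q)),
    ← Finset.sum_sub_distrib]
  refine (measureReal_mono hcover (measure_ne_top P _)).trans
    ((measureReal_biUnion_finset_le _ _).trans_eq ?_)
  exact Finset.sum_congr rfl fun Q' _ =>
    measureReal_sdiff (fun _ h => h.trans hst) (hmeas Q')

lemma continuous_cubeIntensity_isPresent {P : Measure (Config d)} [IsFiniteMeasure P]
    {I : Set ℝ} (hcont : ∀ Q : ElemCube d,
      ContinuousOn (fun t : ℝ => P.real {ω : Config d | (ω Q : ℝ) ≤ t}) I) (k : ℕ) :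
    Continuous fun t : I => cubeIntensity P (IsPresent t) k :=
  ((IncrementsDominated.sum fun b _ => incrementsDominated_measureReal_isPresent P
    (cubeAt 0 b)).domRestrict I).continuous <|
      continuous_finsetSum _ fun _ _ => continuous_finsetSum _ fun Q' _ => (hcont Q').domRestrict

lemma incrementsDominated_betaHat {P : Measure (Config d)} [IsProbabilityMeasure P]
    [ErgodicVAdd (Fin d → ℤ) (Config d) P] (q : ℕ) :
    IncrementsDominated (betaHat d q P) fun t =>
      cubeIntensity P (IsPresent t) q + cubeIntensity P (IsPresent t) (q + 1) := by
  intro s t hst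
  have hcard (t : ℝ) := ae_hasDensity_card_presentCubes_add (P := P) t q
  obtain ⟨ω, hs, ht, hcs, hct⟩ := ((ae_hasDensity_bettiN (P := P) q s).and
    ((ae_hasDensity_bettiN q t).and ((hcard s).and (hcard t)))).exists
  exact le_of_tendsto_of_tendsto' (Tendsto.sub ht hs).abs (Tendsto.sub hct hcs) fun n =>
    (incrementsDominated_bettiN n ω).const_mul (by positivity) hst

end Uniform

/-- **uniform LLN for Betti numbers.** Fix `0 ≤ q < d` and let `P` be a
stationary and ergodic probability measure on `Ω = [0,1]^{K^d}` whose marginal distribution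
functions `F^Q(t) = P(ω_Q ≤ t)` are continuous on `[0,1]` for every elementary cube `Q`.
Then, `P`-almost surely,
`sup_{t ∈ [0,1]} | |Λ_n|⁻¹ β_q^n(t) - β̂_q(t) | → 0` as `n → ∞`, where
`β̂_q(t) = limsup_{n→∞} |Λ_n|⁻¹ E[β_q^n(t)]`. -/
theorem uniform_lln_betti (d q : ℕ) (hq : q < d)
    (P : Measure (Config d)) [IsProbabilityMeasure P]
    (hstat : Stationary P) (herg : ErgodicConfig P)
    (hcont : ∀ Q : ElemCube d,
      ContinuousOn (fun t : ℝ => (P {ω : Config d | (ω Q : ℝ) ≤ t}).toReal)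
        (Set.Icc (0 : ℝ) 1)) :
    ∀ᵐ ω ∂P,
      Tendsto
        (fun n : ℕ => ⨆ t : Set.Icc (0 : ℝ) 1,
          |((2 * (n : ℝ)) ^ d)⁻¹ * (bettiN d q n (t : ℝ) ω : ℝ) - betaHat d q P (t : ℝ)|)
        atTop (𝓝 0) := by
  have := herg.ergodicVAdd hstat
  obtain ⟨S, hcountable, hdense, hbot, htop⟩ := exists_countable_dense_bot_top (Set.Icc (0 : ℝ) 1)
  have hpointwise : ∀ᵐ ω ∂P, ∀ t ∈ S,
      HasDensity d (fun n => (bettiN d q n t ω : ℝ)) (betaHat d q P t) ∧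
      HasDensity d (fun n => (presentCubes (t : ℝ) q n ω).card +
        (presentCubes (t : ℝ) (q + 1) n ω).card)
        (cubeIntensity P (IsPresent t) q + cubeIntensity P (IsPresent t) (q + 1)) :=
    (ae_ball_iff hcountable).2 fun t _ =>
      (ae_hasDensity_bettiN q t).and (ae_hasDensity_card_presentCubes_add t q)
  filter_upwards [hpointwise] with ω hω
  exact tendsto_iSup_abs_sub <| tendstoUniformly_of_incrementsDominated hdense hbot htop
    (fun n => ((incrementsDominated_bettiN n ω).const_mul (by positivity)).domRestrict _)
    ((incrementsDominated_betaHat q).domRestrict _)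
    ((continuous_cubeIntensity_isPresent hcont q).add
      (continuous_cubeIntensity_isPresent hcont (q + 1)))
    (fun t ht => (hω t ht).1) fun t ht => (hω t ht).2

end
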